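/- arXiv:1305.6436 — 6 statements merged into one kernel-verified Lean document; each statement's English description precedes it below -/
import Mathlib

section
/- Let μ0, μ1 be Borel probability measures on ℝ² with finite second moment and suppose μ0 is absolutely continuous with respect to the Lebesgue measure L2. Then Opt3(μ0, μ1) contains exactly one element, and this element is induced by a map: there exists a Borel map T : ℝ² → ℝ² such that the unique γ ∈ Opt3(μ0,μ1) equals the pushforward of μ0 under z ↦ (z, T(z)). -/
open MeasureTheory ENNReal
open scoped Classical

noncomputable section

/-- Couplings of two measures on ℝ²: probability measures on the product with the given marginals. -/
def Couplings (μ ν : Measure (ℝ × ℝ)) : Set (Measure ((ℝ × ℝ) × (ℝ × ℝ))) :=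
  {γ | IsProbabilityMeasure γ ∧ γ.map Prod.fst = μ ∧ γ.map Prod.snd = ν}

/-- Transport cost for the squared sup-norm distance on ℝ². -/
def costSup (γ : Measure ((ℝ × ℝ) × (ℝ × ℝ))) : ℝ≥0∞ :=
  ∫⁻ p, edist p.1 p.2 ^ 2 ∂γ

/-- Transport cost for the squared horizontal displacement. -/
def costX (γ : Measure ((ℝ × ℝ) × (ℝ × ℝ))) : ℝ≥0∞ :=
  ∫⁻ p, edist p.1.1 p.2.1 ^ 2 ∂γ

/-- Transport cost for the squared vertical displacement. -/
def costY (γ : Measure ((ℝ × ℝ) × (ℝ × ℝ))) : ℝ≥0∞ :=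
  ∫⁻ p, edist p.1.2 p.2.2 ^ 2 ∂γ

/-- Couplings minimizing the squared sup-norm cost. -/
def Opt1 (μ ν : Measure (ℝ × ℝ)) : Set (Measure ((ℝ × ℝ) × (ℝ × ℝ))) :=
  {γ ∈ Couplings μ ν | ∀ γ' ∈ Couplings μ ν, costSup γ ≤ costSup γ'}

/-- Elements of Opt1 minimizing the squared horizontal cost. -/
def Opt2 (μ ν : Measure (ℝ × ℝ)) : Set (Measure ((ℝ × ℝ) × (ℝ × ℝ))) :=
  {γ ∈ Opt1 μ ν | ∀ γ' ∈ Opt1 μ ν, costX γ ≤ costX γ'}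

/-- Elements of Opt2 minimizing the squared vertical cost. -/
def Opt3 (μ ν : Measure (ℝ × ℝ)) : Set (Measure ((ℝ × ℝ) × (ℝ × ℝ))) :=
  {γ ∈ Opt2 μ ν | ∀ γ' ∈ Opt2 μ ν, costY γ ≤ costY γ'}

/-! A plan `γ` in `Opt3` does not charge the pairs of transported points `(z, w)`, `(z', w')` for
which exchanging the targets `w` and `w'` lowers the three costs lexicographically. Suppose that
two targets `w`, `w'` drawn independently from the disintegration of `γ` over the same point `z`
differ with positive probability. Since `μ0` is absolutely continuous, near `z` it contains mass
together with its translate by `t • v`, for all small `t • v`, so `γ` sees pairs `(z, w)`,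
`(z + t • v, w')` close to the given ones, for a direction `v` of our choice.

* Unless `w - z` and `w' - z` have equal norm and are extremal for the triangle inequality, take for
  `v` the longer of the two (up to sign): the exchange lowers the sup cost at first order in `t`.
* Otherwise the two displacements share a coordinate that realizes both norms. Taking
  `v = w - w'`, the exchange changes neither the sup cost nor the cost of this coordinate, and it
  lowers the cost of the other coordinate.

So every plan in `Opt3` lives on a graph. As `Opt3` is convex, the midpoint of two of its elements
also lives on a graph, which forces them to coincide. -/

open Filter Set ProbabilityTheory
open scoped Topology NNReal Pointwise ProbabilityTheory

/-! ### Existence and convexity -/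

section Minimizers

variable {α β : Type*}

/-- The set of minimizers of `f` over `S`. The lexicographic problem of the theorem iterates this
construction: each `Opt` is, by definition, the set of minimizers of a cost over the previous
one. -/
def minimizers [LE β] (f : α → β) (S : Set α) : Set α :=
  {a ∈ S | ∀ b ∈ S, f a ≤ f b}

lemma mem_minimizers_of_le [Preorder β] {f : α → β} {S : Set α} {a b : α}
    (ha : a ∈ minimizers f S) (hb : b ∈ S) (hba : f b ≤ f a) : b ∈ minimizers f S :=
  ⟨hb, fun c hc => hba.trans (ha.2 c hc)⟩

lemma preimage_minimizers [LE β] {γ : Type*} (e : γ → α) (f : α → β) {S : Set α}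
    (hS : S ⊆ range e) : e ⁻¹' minimizers f S = minimizers (f ∘ e) (e ⁻¹' S) := by
  ext x
  refine and_congr_right fun _ => ⟨fun h y hy => h _ hy, fun h b hb => ?_⟩
  obtain ⟨y, rfl⟩ := hS hb
  exact h y hb

lemma nonempty_minimizers [LinearOrder β] [TopologicalSpace α] {f : α → β} {S : Set α}
    (hf : LowerSemicontinuous f) (hS : IsCompact S) (hne : S.Nonempty) :
    (minimizers f S).Nonempty :=
  let ⟨a, haS, ha⟩ := (hf.lowerSemicontinuousOn S).exists_isMinOn hne hS
  ⟨a, haS, isMinOn_iff.1 ha⟩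

lemma isCompact_minimizers [LinearOrder β] [TopologicalSpace α] {f : α → β} {S : Set α}
    (hf : LowerSemicontinuous f) (hS : IsCompact S) : IsCompact (minimizers f S) := by
  rcases (minimizers f S).eq_empty_or_nonempty with h | ⟨a, ha⟩
  · exact h ▸ isCompact_empty
  · have : minimizers f S = S ∩ f ⁻¹' Iic (f a) :=
      Subset.antisymm (fun b hb => ⟨hb.1, hb.2 a ha.1⟩)
        fun b hb => mem_minimizers_of_le ha hb.1 hb.2
    exact this ▸ hS.inter_right (hf.isClosed_preimage _)

lemma convex_minimizers {𝕜 E : Type*} [Semiring 𝕜] [PartialOrder 𝕜] [AddCommMonoid E]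
    [AddCommMonoid β] [PartialOrder β] [IsOrderedAddMonoid β] [SMul 𝕜 E] [Module 𝕜 β]
    [PosSMulMono 𝕜 β] {f : E → β} {S : Set E} (hf : ConvexOn 𝕜 S f) :
    Convex 𝕜 (minimizers f S) := fun a ha b hb s t hs ht hst =>
  ⟨hf.1 ha.1 hb.1 hs ht hst, fun c hc =>
    calc f (s • a + t • b) ≤ s • f a + t • f b := hf.2 ha.1 hb.1 hs ht hst
      _ ≤ s • f c + t • f c :=
        add_le_add (smul_le_smul_of_nonneg_left (ha.2 c hc) hs)
          (smul_le_smul_of_nonneg_left (hb.2 c hc) ht)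
      _ = f c := by rw [← add_smul, hst, one_smul]⟩

end Minimizers

section LowerSemicontinuity

variable {X : Type*} [MeasurableSpace X]

lemma lintegral_eq_iSup_lintegral_min_nat {μ : Measure X} {g : X → ℝ≥0} (hg : Measurable g) :
    ∫⁻ x, g x ∂μ = ⨆ n : ℕ, ∫⁻ x, (min (g x) n : ℝ≥0) ∂μ := by
  rw [← lintegral_iSup (fun n => (hg.min measurable_const).coe_nnreal_ennreal)
    fun n m hnm x => ENNReal.coe_le_coe.2 (min_le_min_left _ (Nat.cast_le.2 hnm))]
  refine lintegral_congr fun x =>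
    le_antisymm ?_ (iSup_le fun n => ENNReal.coe_le_coe.2 (min_le_left _ _))
  obtain ⟨n, hn⟩ := exists_nat_ge (g x)
  exact le_iSup_of_le n (by rw [min_eq_left hn])

variable [TopologicalSpace X] [OpensMeasurableSpace X]

lemma continuous_lintegral_of_le {g : X → ℝ≥0} (hg : Continuous g) {C : ℝ≥0} (hC : ∀ x, g x ≤ C) :
    Continuous fun γ : ProbabilityMeasure X => ∫⁻ x, g x ∂(γ : Measure X) := by
  let f : BoundedContinuousFunction X ℝ≥0 := .mkOfBound ⟨g, hg⟩ C fun x y =>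
    abs_sub_le_of_nonneg_of_le (g x).2 (hC x) (g y).2 (hC y)
  exact continuous_iff_continuousAt.2 fun γ =>
    ProbabilityMeasure.tendsto_iff_forall_lintegral_tendsto.1 (tendsto_id (x := 𝓝 γ)) f

lemma lowerSemicontinuous_lintegral {g : X → ℝ≥0} (hg : Continuous g) :
    LowerSemicontinuous fun γ : ProbabilityMeasure X => ∫⁻ x, g x ∂(γ : Measure X) := by
  simp only [lintegral_eq_iSup_lintegral_min_nat hg.measurable]
  exact lowerSemicontinuous_iSup fun n =>
    (continuous_lintegral_of_le (hg.min continuous_const)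
      fun x => min_le_right _ _).lowerSemicontinuous

end LowerSemicontinuity

section Compactness

variable {X Y : Type*} [MeasurableSpace X] [MeasurableSpace Y]
  [TopologicalSpace X] [PolishSpace X] [BorelSpace X]
  [TopologicalSpace Y] [PolishSpace Y] [BorelSpace Y]

lemma isCompact_setOf_map_fst_eq_and_map_snd_eq (μ : ProbabilityMeasure X)
    (ν : ProbabilityMeasure Y) :
    IsCompact {γ : ProbabilityMeasure (X × Y) |
      γ.map measurable_fst.aemeasurable = μ ∧ γ.map measurable_snd.aemeasurable = ν} := by
  set K := {γ : ProbabilityMeasure (X × Y) |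
    γ.map measurable_fst.aemeasurable = μ ∧ γ.map measurable_snd.aemeasurable = ν}
  have hclosed : IsClosed K :=
    (isClosed_singleton.preimage (ProbabilityMeasure.continuous_map continuous_fst)).inter
      (isClosed_singleton.preimage (ProbabilityMeasure.continuous_map continuous_snd))
  have htight : IsTightMeasureSet {(γ : Measure (X × Y)) | γ ∈ K} := by
    refine .prodMk (isTightMeasureSet_singleton (μ := (μ : Measure X)) |>.subset ?_)
      (isTightMeasureSet_singleton (μ := (ν : Measure Y)) |>.subset ?_)
    · rintro _ ⟨_, ⟨γ, hγ, rfl⟩, rfl⟩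
      exact congrArg Subtype.val hγ.1
    · rintro _ ⟨_, ⟨γ, hγ, rfl⟩, rfl⟩
      exact congrArg Subtype.val hγ.2
  exact hclosed.closure_eq ▸ isCompact_closure_of_isTightMeasureSet htight

end Compactness

/-- The squared distance of the two components of `p`, seen through `π`. The three costs of the
theorem are the integrals of `sqEDist id`, `sqEDist Prod.fst` and `sqEDist Prod.snd`. -/
def sqEDist {E F : Type*} [PseudoEMetricSpace F] (π : E → F) (p : E × E) : ℝ≥0∞ :=
  edist (π p.1) (π p.2) ^ 2

section SqEDist

variable {E F : Type*} {π : E → F}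

lemma measurable_sqEDist [MeasurableSpace E] [PseudoEMetricSpace F] [MeasurableSpace F]
    [OpensMeasurableSpace F] [SecondCountableTopology F] (hπ : Measurable π) :
    Measurable (sqEDist π) :=
  ((hπ.comp measurable_fst).edist (hπ.comp measurable_snd)).pow_const 2

lemma lowerSemicontinuous_lintegral_sqEDist [PseudoMetricSpace F] [TopologicalSpace E]
    [SecondCountableTopology E] [MeasurableSpace E] [OpensMeasurableSpace E] (hπ : Continuous π) :
    LowerSemicontinuous fun γ : ProbabilityMeasure (E × E) =>
      ∫⁻ p, sqEDist π p ∂(γ : Measure (E × E)) := by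
  have := lowerSemicontinuous_lintegral (X := E × E) (g := fun p => nndist (π p.1) (π p.2) ^ 2)
    (((hπ.comp continuous_fst).nndist (hπ.comp continuous_snd)).pow 2)
  simpa only [sqEDist, edist_nndist, ENNReal.coe_pow] using this

end SqEDist

section Couplings

variable {μ ν : Measure (ℝ × ℝ)} {γ : Measure ((ℝ × ℝ) × (ℝ × ℝ))}

lemma costX_le_costSup (γ : Measure ((ℝ × ℝ) × (ℝ × ℝ))) : costX γ ≤ costSup γ :=
  lintegral_mono fun _ => pow_le_pow_left' (le_max_left _ _) 2

lemma costY_le_costSup (γ : Measure ((ℝ × ℝ) × (ℝ × ℝ))) : costY γ ≤ costSup γ :=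
  lintegral_mono fun _ => pow_le_pow_left' (le_max_right _ _) 2

lemma prod_mem_couplings [IsProbabilityMeasure μ] [IsProbabilityMeasure ν] :
    μ.prod ν ∈ Couplings μ ν :=
  ⟨inferInstance, by simp, by simp⟩

lemma isCompact_preimage_couplings [IsProbabilityMeasure μ] [IsProbabilityMeasure ν] :
    IsCompact ((↑) ⁻¹' Couplings μ ν : Set (ProbabilityMeasure ((ℝ × ℝ) × (ℝ × ℝ)))) := by
  convert isCompact_setOf_map_fst_eq_and_map_snd_eq ⟨μ, ‹_›⟩ ⟨ν, ‹_›⟩ using 1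
  ext γ
  exact ⟨fun h => ⟨Subtype.ext h.2.1, Subtype.ext h.2.2⟩,
    fun h => ⟨γ.2, congrArg Subtype.val h.1, congrArg Subtype.val h.2⟩⟩

lemma opt3_subset_couplings : Opt3 μ ν ⊆ Couplings μ ν :=
  fun _ h => h.1.1.1

lemma opt3_nonempty [IsProbabilityMeasure μ] [IsProbabilityMeasure ν] : (Opt3 μ ν).Nonempty := by
  let e : ProbabilityMeasure ((ℝ × ℝ) × (ℝ × ℝ)) → Measure ((ℝ × ℝ) × (ℝ × ℝ)) := (↑)
  have hrange : Couplings μ ν ⊆ range e := fun γ h => ⟨⟨γ, h.1⟩, rfl⟩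
  have h₁ : e ⁻¹' Opt1 μ ν = minimizers (costSup ∘ e) (e ⁻¹' Couplings μ ν) :=
    preimage_minimizers e costSup hrange
  have h₂ : e ⁻¹' Opt2 μ ν = minimizers (costX ∘ e) (e ⁻¹' Opt1 μ ν) :=
    preimage_minimizers e costX fun _ h => hrange h.1
  have h₃ : e ⁻¹' Opt3 μ ν = minimizers (costY ∘ e) (e ⁻¹' Opt2 μ ν) :=
    preimage_minimizers e costY fun _ h => hrange h.1.1
  have hsup : LowerSemicontinuous (costSup ∘ e) :=
    lowerSemicontinuous_lintegral_sqEDist continuous_id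
  have hX : LowerSemicontinuous (costX ∘ e) := lowerSemicontinuous_lintegral_sqEDist continuous_fst
  have hY : LowerSemicontinuous (costY ∘ e) := lowerSemicontinuous_lintegral_sqEDist continuous_snd
  have hK : IsCompact (e ⁻¹' Couplings μ ν) := isCompact_preimage_couplings
  have hne : (e ⁻¹' Couplings μ ν).Nonempty := ⟨⟨μ.prod ν, inferInstance⟩, prod_mem_couplings⟩
  have hK₁ := isCompact_minimizers hsup hK
  have hne₁ := nonempty_minimizers hsup hK hne
  have hne₃ : (e ⁻¹' Opt3 μ ν).Nonempty := by
    rw [h₃, h₂, h₁]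
    exact nonempty_minimizers hY (isCompact_minimizers hX hK₁) (nonempty_minimizers hX hK₁ hne₁)
  exact let ⟨γ, hγ⟩ := hne₃; ⟨e γ, hγ⟩

lemma convex_couplings (μ ν : Measure (ℝ × ℝ)) : Convex ℝ≥0∞ (Couplings μ ν) := by
  rintro γ ⟨hγ, hγfst, hγsnd⟩ γ' ⟨hγ', hγ'fst, hγ'snd⟩ s t - - hst
  refine ⟨⟨by simp [hst]⟩, ?_, ?_⟩
  · rw [Measure.map_add _ _ measurable_fst, Measure.map_smul, Measure.map_smul, hγfst, hγ'fst,
      ← add_smul, hst, one_smul]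
  · rw [Measure.map_add _ _ measurable_snd, Measure.map_smul, Measure.map_smul, hγsnd, hγ'snd,
      ← add_smul, hst, one_smul]

lemma convexOn_lintegral {X : Type*} [MeasurableSpace X] {S : Set (Measure X)}
    (hS : Convex ℝ≥0∞ S) (f : X → ℝ≥0∞) : ConvexOn ℝ≥0∞ S fun γ => ∫⁻ x, f x ∂γ :=
  ⟨hS, fun _ _ _ _ _ _ _ _ _ => by
    simp only [lintegral_add_measure, lintegral_smul_measure, le_refl]⟩

lemma convex_opt3 (μ ν : Measure (ℝ × ℝ)) : Convex ℝ≥0∞ (Opt3 μ ν) := by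
  have h₁ : Convex ℝ≥0∞ (Opt1 μ ν) :=
    convex_minimizers (convexOn_lintegral (convex_couplings μ ν) _)
  have h₂ : Convex ℝ≥0∞ (Opt2 μ ν) := convex_minimizers (convexOn_lintegral h₁ _)
  exact convex_minimizers (convexOn_lintegral h₂ _)

end Couplings

/-! ### Exchanging targets -/

section Exchange

variable {X Y : Type*}

/-- Two transported points `(x, y)`, `(x', y')` after exchanging their targets. -/
def swapTargets (r : (X × Y) × (X × Y)) : (X × Y) × (X × Y) :=
  ((r.1.1, r.2.2), (r.2.1, r.1.2))

/-- The pairs of transported points for which exchanging the targets strictly lowers the total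
`c`-cost. -/
def swapGain (c : X × Y → ℝ≥0∞) : Set ((X × Y) × (X × Y)) :=
  {r | c (swapTargets r).1 + c (swapTargets r).2 < c r.1 + c r.2}

/-- The pairs of transported points for which exchanging the targets does not change the total
`c`-cost. -/
def swapTie (c : X × Y → ℝ≥0∞) : Set ((X × Y) × (X × Y)) :=
  {r | c (swapTargets r).1 + c (swapTargets r).2 = c r.1 + c r.2}

variable [MeasurableSpace X] [MeasurableSpace Y]

lemma measurable_swapTargets : Measurable (swapTargets : (X × Y) × (X × Y) → _) := by
  unfold swapTargets; fun_prop

lemma measurableSet_swapGain {c : X × Y → ℝ≥0∞} (hc : Measurable c) :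
    MeasurableSet (swapGain c) := by
  have := measurable_swapTargets (X := X) (Y := Y)
  exact measurableSet_lt (by fun_prop) (by fun_prop)

lemma measurableSet_swapTie {c : X × Y → ℝ≥0∞} (hc : Measurable c) :
    MeasurableSet (swapTie c) := by
  have := measurable_swapTargets (X := X) (Y := Y)
  exact measurableSet_eq_fun (by fun_prop) (by fun_prop)

/-- The sum of the two marginals of a measure on pairs: the mass used by a plan `η` that selects
pairs of points. -/
def pairSum {Z : Type*} [MeasurableSpace Z] (η : Measure (Z × Z)) : Measure Z :=
  η.map Prod.fst + η.map Prod.snd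

lemma pairSum_mono {Z : Type*} [MeasurableSpace Z] {η η' : Measure (Z × Z)} (h : η ≤ η') :
    pairSum η ≤ pairSum η' :=
  add_le_add (Measure.map_mono h measurable_fst) (Measure.map_mono h measurable_snd)

lemma lintegral_pairSum {Z : Type*} [MeasurableSpace Z] (η : Measure (Z × Z)) {f : Z → ℝ≥0∞}
    (hf : Measurable f) : ∫⁻ z, f z ∂pairSum η = ∫⁻ r, f r.1 + f r.2 ∂η := by
  rw [pairSum, lintegral_add_measure, lintegral_map hf measurable_fst,
    lintegral_map hf measurable_snd, lintegral_add_left (by fun_prop)]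

lemma map_pairSum {Z W : Type*} [MeasurableSpace Z] [MeasurableSpace W] {f : Z → W}
    (hf : Measurable f) (η : Measure (Z × Z)) :
    (pairSum η).map f = η.map (fun r => f r.1) + η.map (fun r => f r.2) := by
  rw [pairSum, Measure.map_add _ _ hf, Measure.map_map hf measurable_fst,
    Measure.map_map hf measurable_snd]
  rfl

lemma map_fst_pairSum_swapTargets (η : Measure ((X × Y) × (X × Y))) :
    (pairSum (η.map swapTargets)).map Prod.fst = (pairSum η).map Prod.fst := by
  rw [map_pairSum measurable_fst, map_pairSum measurable_fst,
    Measure.map_map (by fun_prop) measurable_swapTargets,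
    Measure.map_map (by fun_prop) measurable_swapTargets]
  rfl

lemma map_snd_pairSum_swapTargets (η : Measure ((X × Y) × (X × Y))) :
    (pairSum (η.map swapTargets)).map Prod.snd = (pairSum η).map Prod.snd := by
  rw [map_pairSum measurable_snd, map_pairSum measurable_snd,
    Measure.map_map (by fun_prop) measurable_swapTargets,
    Measure.map_map (by fun_prop) measurable_swapTargets]
  exact add_comm _ _

/-- The plan obtained from `γ` by exchanging the targets of the pairs of points selected by `η`.
It is meant for `pairSum η ≤ γ`, so that the subtraction is not truncated. -/
def exchange (γ : Measure (X × Y)) (η : Measure ((X × Y) × (X × Y))) : Measure (X × Y) :=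
  γ - pairSum η + pairSum (η.map swapTargets)

variable {γ : Measure (X × Y)} {η : Measure ((X × Y) × (X × Y))}

lemma lintegral_exchange {c : X × Y → ℝ≥0∞} (hc : Measurable c) :
    ∫⁻ p, c p ∂exchange γ η =
      ∫⁻ p, c p ∂(γ - pairSum η) + ∫⁻ r, c (swapTargets r).1 + c (swapTargets r).2 ∂η := by
  rw [exchange, lintegral_add_measure, lintegral_pairSum _ hc,
    lintegral_map (by fun_prop) measurable_swapTargets]

variable [IsFiniteMeasure γ]

lemma sub_pairSum_add_pairSum (h : pairSum η ≤ γ) : γ - pairSum η + pairSum η = γ :=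
  have := isFiniteMeasure_of_le γ h
  Measure.sub_add_cancel_of_le h

lemma map_fst_exchange (h : pairSum η ≤ γ) :
    (exchange γ η).map Prod.fst = γ.map Prod.fst := by
  rw [exchange, Measure.map_add _ _ measurable_fst, map_fst_pairSum_swapTargets,
    ← Measure.map_add _ _ measurable_fst, sub_pairSum_add_pairSum h]

lemma map_snd_exchange (h : pairSum η ≤ γ) :
    (exchange γ η).map Prod.snd = γ.map Prod.snd := by
  rw [exchange, Measure.map_add _ _ measurable_snd, map_snd_pairSum_swapTargets,
    ← Measure.map_add _ _ measurable_snd, sub_pairSum_add_pairSum h]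

lemma lintegral_eq_sub_pairSum_add (h : pairSum η ≤ γ) {c : X × Y → ℝ≥0∞} (hc : Measurable c) :
    ∫⁻ p, c p ∂γ = ∫⁻ p, c p ∂(γ - pairSum η) + ∫⁻ r, c r.1 + c r.2 ∂η := by
  rw [← lintegral_pairSum η hc, ← lintegral_add_measure, sub_pairSum_add_pairSum h]

lemma lintegral_exchange_eq (h : pairSum η ≤ γ) {c : X × Y → ℝ≥0∞} (hc : Measurable c)
    (htie : ∀ᵐ r ∂η, r ∈ swapTie c) : ∫⁻ p, c p ∂exchange γ η = ∫⁻ p, c p ∂γ := by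
  rw [lintegral_exchange hc, lintegral_eq_sub_pairSum_add h hc, lintegral_congr_ae htie]

lemma lintegral_exchange_lt (h : pairSum η ≤ γ) {c : X × Y → ℝ≥0∞} (hc : Measurable c)
    (hfin : ∫⁻ p, c p ∂γ ≠ ⊤) (hη : η ≠ 0) (hgain : ∀ᵐ r ∂η, r ∈ swapGain c) :
    ∫⁻ p, c p ∂exchange γ η < ∫⁻ p, c p ∂γ := by
  rw [lintegral_eq_sub_pairSum_add h hc] at hfin ⊢
  rw [lintegral_exchange hc]
  obtain ⟨hfin₁, hfin₂⟩ := ENNReal.add_ne_top.1 hfin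
  exact ENNReal.add_lt_add_left hfin₁ <| lintegral_strict_mono hη (by fun_prop)
    (ne_top_of_le_ne_top hfin₂ (lintegral_mono_ae (hgain.mono fun _ hr => hr.le))) hgain

/-- `B` is invisible to every plan `η` selecting pairs of points out of `γ`. For
`B = swapGain c` this is the measure form of two-point `c`-cyclical monotonicity. -/
def PairNegligible {Z : Type*} [MeasurableSpace Z] (γ : Measure Z) (B : Set (Z × Z)) : Prop :=
  ∀ η : Measure (Z × Z), pairSum η ≤ γ → η B = 0

/-- Exchanging the targets of pairs of points in `E` does not lead from `γ` out of `S`. -/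
def ExchangeStable (S : Set (Measure (X × Y))) (E : Set ((X × Y) × (X × Y))) : Prop :=
  ∀ γ ∈ S, ∀ η, pairSum η ≤ γ → (∀ᵐ r ∂η, r ∈ E) → exchange γ η ∈ S

lemma PairNegligible.union {Z : Type*} [MeasurableSpace Z] {γ : Measure Z} {B B' : Set (Z × Z)}
    (h : PairNegligible γ B) (h' : PairNegligible γ B') : PairNegligible γ (B ∪ B') :=
  fun η hη => measure_union_null (h η hη) (h' η hη)

variable {S : Set (Measure (X × Y))} {E : Set ((X × Y) × (X × Y))} {c : X × Y → ℝ≥0∞}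

lemma ExchangeStable.pairNegligible (hS : ExchangeStable S E) (hE : MeasurableSet E)
    (hc : Measurable c) (hγ : γ ∈ minimizers (fun γ => ∫⁻ p, c p ∂γ) S)
    (hfin : ∫⁻ p, c p ∂γ ≠ ⊤) : PairNegligible γ (E ∩ swapGain c) := by
  intro η hη
  have hmem : ∀ᵐ r ∂η.restrict (E ∩ swapGain c), r ∈ E ∩ swapGain c :=
    ae_restrict_mem (hE.inter (measurableSet_swapGain hc))
  have hle : pairSum (η.restrict (E ∩ swapGain c)) ≤ γ :=
    (pairSum_mono Measure.restrict_le_self).trans hη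
  by_contra hpos
  exact (lintegral_exchange_lt hle hc hfin (by rwa [Ne, Measure.restrict_eq_zero])
    (hmem.mono fun _ => And.right)).not_ge
    (hγ.2 _ (hS γ hγ.1 _ hle (hmem.mono fun _ => And.left)))

lemma ExchangeStable.minimizers (hS : ExchangeStable S E) (hfin : ∀ γ ∈ S, IsFiniteMeasure γ)
    (hc : Measurable c) :
    ExchangeStable (minimizers (fun γ => ∫⁻ p, c p ∂γ) S) (E ∩ swapTie c) := by
  intro γ hγ η hη hmem
  have := hfin γ hγ.1
  exact mem_minimizers_of_le hγ (hS γ hγ.1 η hη (hmem.mono fun _ => And.left))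
    (lintegral_exchange_eq hη hc (hmem.mono fun _ => And.right)).le

end Exchange

section Couplings

lemma exchangeStable_couplings (μ ν : Measure (ℝ × ℝ)) :
    ExchangeStable (Couplings μ ν) univ := by
  rintro γ ⟨hγ, hfst, hsnd⟩ η hη -
  refine ⟨?_, (map_fst_exchange hη).trans hfst, (map_snd_exchange hη).trans hsnd⟩
  rw [← Measure.isProbabilityMeasure_map_iff measurable_fst.aemeasurable, map_fst_exchange hη]
  exact Measure.isProbabilityMeasure_map measurable_fst.aemeasurable

/-- The pairs of transported points whose target exchange lowers the three costs of the theorem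
lexicographically. -/
def lexSwapGain : Set (((ℝ × ℝ) × (ℝ × ℝ)) × ((ℝ × ℝ) × (ℝ × ℝ))) :=
  swapGain (sqEDist id) ∪ swapTie (sqEDist id) ∩ swapGain (sqEDist Prod.fst) ∪
    swapTie (sqEDist id) ∩ swapTie (sqEDist Prod.fst) ∩ swapGain (sqEDist Prod.snd)

lemma pairNegligible_lexSwapGain {μ ν : Measure (ℝ × ℝ)} {γ : Measure ((ℝ × ℝ) × (ℝ × ℝ))}
    (hγ : γ ∈ Opt3 μ ν) (hfin : costSup γ ≠ ⊤) : PairNegligible γ lexSwapGain := by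
  have := (opt3_subset_couplings hγ).1
  have hprob {γ} (h : γ ∈ Couplings μ ν) : IsFiniteMeasure γ := have := h.1; inferInstance
  have hsup : Measurable (sqEDist (id : ℝ × ℝ → ℝ × ℝ)) := measurable_sqEDist measurable_id
  have hX : Measurable (sqEDist (Prod.fst : ℝ × ℝ → ℝ)) := measurable_sqEDist measurable_fst
  have hY : Measurable (sqEDist (Prod.snd : ℝ × ℝ → ℝ)) := measurable_sqEDist measurable_snd
  have h₀ := exchangeStable_couplings μ ν
  have h₁ : ExchangeStable (Opt1 μ ν) (univ ∩ swapTie (sqEDist id)) :=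
    h₀.minimizers (fun _ => hprob) hsup
  have h₂ : ExchangeStable (Opt2 μ ν) (univ ∩ swapTie (sqEDist id) ∩ swapTie (sqEDist Prod.fst)) :=
    h₁.minimizers (fun _ h => hprob h.1) hX
  rw [univ_inter] at h₁ h₂
  have hgain := h₀.pairNegligible .univ hsup hγ.1.1 hfin
  rw [univ_inter] at hgain
  refine (hgain.union
    (h₁.pairNegligible (measurableSet_swapTie hsup) hX hγ.1 ?_)).union
    (h₂.pairNegligible ((measurableSet_swapTie hsup).inter (measurableSet_swapTie hX)) hY hγ ?_)
  · exact ne_top_of_le_ne_top hfin (costX_le_costSup γ)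
  · exact ne_top_of_le_ne_top hfin (costY_le_costSup γ)

end Couplings

/-! ### Translated pairs of points -/

section Translation

variable {G : Type*} [AddGroup G] [TopologicalSpace G] [IsTopologicalAddGroup G]
  [LocallyCompactSpace G] [T2Space G] [MeasurableSpace G] [BorelSpace G]
  {μ ν : Measure G} {D : Set G}

lemma eventually_measure_inter_preimage_add_ne_zero [ν.IsAddLeftInvariant]
    [IsFiniteMeasureOnCompacts ν] [ν.InnerRegular] (hD : MeasurableSet D) (hνD : ν D ≠ 0) :
    ∀ᶠ u in 𝓝 (0 : G), ν (D ∩ (u + ·) ⁻¹' D) ≠ 0 := by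
  obtain ⟨K, hKD, hK, hνK⟩ := hD.exists_lt_isCompact (pos_iff_ne_zero.2 hνD)
  have hsmall : ∀ᶠ u : G in 𝓝 0, ν ((-u +ᵥ K) \ K) < ν K :=
    (continuous_neg.tendsto' (0 : G) 0 neg_zero).eventually
      (eventually_nhds_zero_measure_vadd_sdiff_lt hK hK.isClosed hνK.ne')
  filter_upwards [hsmall] with u hu hnull
  refine hu.not_ge ?_
  have hinter : ν ((-u +ᵥ K) ∩ K) = 0 := by
    refine measure_mono_null ?_ hnull
    rw [← preimage_vadd, inter_comm]
    exact inter_subset_inter hKD (preimage_mono hKD)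
  calc ν K = ν (-u +ᵥ K) := (measure_vadd ν (-u) K).symm
    _ ≤ ν ((-u +ᵥ K) ∩ K) + ν ((-u +ᵥ K) \ K) := measure_le_inter_add_sdiff _ _ _
    _ = ν ((-u +ᵥ K) \ K) := by rw [hinter, zero_add]

lemma exists_smul_restrict_le {X : Type*} [MeasurableSpace X] {μ ν : Measure X} [SigmaFinite μ]
    [SigmaFinite ν] (hac : μ ≪ ν) {D : Set X} (hD : MeasurableSet D) (hμD : μ D ≠ 0) :
    ∃ D' ⊆ D, MeasurableSet D' ∧ ν D' ≠ 0 ∧ ∃ c : ℝ≥0∞, c ≠ 0 ∧ c • ν.restrict D' ≤ μ := by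
  let f := μ.rnDeriv ν
  have hf : Measurable f := μ.measurable_rnDeriv ν
  have hμ : ν.withDensity f = μ := Measure.withDensity_rnDeriv_eq μ ν hac
  have hcover : D ⊆ {x | f x = 0} ∪ ⋃ n : ℕ, D ∩ {x | (n : ℝ≥0∞)⁻¹ ≤ f x} := fun x hx => by
    by_cases h : f x = 0
    · exact .inl h
    · obtain ⟨n, hn⟩ := ENNReal.exists_inv_nat_lt h
      exact .inr (mem_iUnion.2 ⟨n, hx, hn.le⟩)
  have hzero : μ {x | f x = 0} = 0 := by
    simpa [ae_iff, f] using Measure.rnDeriv_pos hac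
  obtain ⟨n, hn⟩ : ∃ n : ℕ, μ (D ∩ {x | (n : ℝ≥0∞)⁻¹ ≤ f x}) ≠ 0 := by
    by_contra! h
    exact hμD (measure_mono_null hcover (measure_union_null hzero (measure_iUnion_null h)))
  have hD' : MeasurableSet (D ∩ {x | (n : ℝ≥0∞)⁻¹ ≤ f x}) :=
    hD.inter (measurableSet_le measurable_const hf)
  refine ⟨_, inter_subset_left, hD', fun h => hn (hac h), (n : ℝ≥0∞)⁻¹, by simp, ?_⟩
  calc (n : ℝ≥0∞)⁻¹ • ν.restrict (D ∩ {x | (n : ℝ≥0∞)⁻¹ ≤ f x})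
      = (ν.restrict (D ∩ {x | (n : ℝ≥0∞)⁻¹ ≤ f x})).withDensity fun _ => (n : ℝ≥0∞)⁻¹ :=
        (withDensity_const _).symm
    _ ≤ (ν.restrict (D ∩ {x | (n : ℝ≥0∞)⁻¹ ≤ f x})).withDensity f :=
        withDensity_mono ((ae_restrict_mem hD').mono fun _ hx => hx.2)
    _ = μ.restrict (D ∩ {x | (n : ℝ≥0∞)⁻¹ ≤ f x}) := by rw [← restrict_withDensity hD', hμ]
    _ ≤ μ := Measure.restrict_le_self

lemma eventually_exists_add_map_le [ν.IsAddLeftInvariant] [IsFiniteMeasureOnCompacts ν]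
    [ν.InnerRegular] [SigmaFinite ν] [SigmaFinite μ] (hac : μ ≪ ν) (hD : MeasurableSet D)
    (hμD : μ D ≠ 0) :
    ∀ᶠ u in 𝓝 (0 : G), ∃ ξ : Measure G, ξ ≠ 0 ∧ ξ + ξ.map (u + ·) ≤ μ ∧
      ∀ᵐ z ∂ξ, z ∈ D ∧ u + z ∈ D := by
  obtain ⟨D', hD'D, hD', hνD', c, hc, hle⟩ := exists_smul_restrict_le hac hD hμD
  filter_upwards [eventually_measure_inter_preimage_add_ne_zero hD' hνD'] with u hu
  have hτ : Measurable (u + · : G → G) := measurable_const_add u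
  set F := D' ∩ (u + ·) ⁻¹' D'
  have hF : MeasurableSet F := hD'.inter (hτ hD')
  have hmap : (ν.restrict F).map (u + ·) ≤ ν.restrict D' :=
    calc (ν.restrict F).map (u + ·)
        ≤ (ν.restrict ((u + ·) ⁻¹' D')).map (u + ·) :=
          Measure.map_mono (Measure.restrict_mono_set _ inter_subset_right) hτ
      _ = ν.restrict D' := by rw [← Measure.restrict_map hτ hD', map_add_left_eq_self]
  refine ⟨(c / 2) • ν.restrict F, ?_, ?_, ?_⟩
  · simpa using ⟨hc, hu⟩
  · calc (c / 2) • ν.restrict F + ((c / 2) • ν.restrict F).map (u + ·)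
        ≤ (c / 2) • ν.restrict D' + (c / 2) • ν.restrict D' := by
          rw [Measure.map_smul]
          gcongr
          exact inter_subset_left
      _ = c • ν.restrict D' := by rw [← add_smul, ENNReal.add_halves]
      _ ≤ μ := hle
  · exact Measure.ae_smul_measure ((ae_restrict_mem hF).mono fun z hz => ⟨hD'D hz.1, hD'D hz.2⟩) _

end Translation

section FiberPairs

variable {X Y : Type*} [MeasurableSpace X] [MeasurableSpace Y]

/-- For a point `z` with law `ξ`, the law of `((z, w), (τ z, w'))` where `w` and `w'` are chosen
independently according to `κ z` and `κ (τ z)`. -/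
def fiberPairs (ξ : Measure X) (κ : Kernel X Y) {τ : X → X} (hτ : Measurable τ) :
    Measure ((X × Y) × (X × Y)) :=
  (ξ ⊗ₘ (κ ×ₖ κ.comap τ hτ)).map fun q => ((q.1, q.2.1), (τ q.1, q.2.2))

variable {ξ : Measure X} {κ : Kernel X Y} {τ : X → X} (hτ : Measurable τ)

lemma ae_fiberPairs_source_eq [MeasurableEq X] : ∀ᵐ r ∂fiberPairs ξ κ hτ, r.2.1 = τ r.1.1 := by
  refine (ae_map_iff (by fun_prop) ?_).2 (.of_forall fun _ => rfl)
  exact measurableSet_eq_fun (by fun_prop) (by fun_prop)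

variable [SFinite ξ] [IsMarkovKernel κ]

lemma fiberPairs_prod {Q Q' : Set (X × Y)} (hQ : MeasurableSet Q) (hQ' : MeasurableSet Q') :
    fiberPairs ξ κ hτ (Q ×ˢ Q') =
      ∫⁻ z, κ z (Prod.mk z ⁻¹' Q) * κ (τ z) (Prod.mk (τ z) ⁻¹' Q') ∂ξ := by
  have hf : Measurable fun q : X × Y × Y => ((q.1, q.2.1), (τ q.1, q.2.2)) := by fun_prop
  rw [fiberPairs, Measure.map_apply hf (hQ.prod hQ'),
    Measure.compProd_apply (hf (hQ.prod hQ'))]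
  refine lintegral_congr fun z => ?_
  rw [← Kernel.comap_apply κ hτ, ← Kernel.prod_apply_prod]
  rfl

lemma pairSum_fiberPairs : pairSum (fiberPairs ξ κ hτ) = (ξ + ξ.map τ) ⊗ₘ κ := by
  rw [pairSum, Measure.compProd_add_left]
  congr 1 <;> ext Q hQ
  · rw [Measure.map_apply measurable_fst hQ, ← prod_univ, fiberPairs_prod hτ hQ .univ,
      Measure.compProd_apply hQ]
    simp
  · rw [Measure.map_apply measurable_snd hQ, ← univ_prod, fiberPairs_prod hτ .univ hQ,
      Measure.compProd_apply hQ, lintegral_map (Kernel.measurable_kernel_prodMk_left hQ) hτ]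
    simp

lemma pairSum_fiberPairs_le {μ : Measure X} [SFinite μ] (h : ξ + ξ.map τ ≤ μ) :
    pairSum (fiberPairs ξ κ hτ) ≤ μ ⊗ₘ κ := by
  rw [pairSum_fiberPairs hτ]
  refine Measure.le_iff.2 fun Q hQ => ?_
  rw [Measure.compProd_apply hQ, Measure.compProd_apply hQ]
  exact lintegral_mono' h le_rfl

lemma measure_fiber_ne_zero_of_fiberPairs_prod_ne_zero {Q Q' : Set (X × Y)} (hQ : MeasurableSet Q)
    (hQ' : MeasurableSet Q') (hpos : fiberPairs ξ κ measurable_id (Q ×ˢ Q') ≠ 0) :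
    ξ {z | κ z (Prod.mk z ⁻¹' Q) ≠ 0 ∧ κ z (Prod.mk z ⁻¹' Q') ≠ 0} ≠ 0 := by
  contrapose! hpos
  rw [fiberPairs_prod measurable_id hQ hQ']
  refine lintegral_eq_zero_of_ae_eq_zero ?_
  simpa [EventuallyEq, ae_iff] using hpos

end FiberPairs

section CapturesNear

variable {E Y : Type*} [NormedAddCommGroup E] [NormedSpace ℝ E] [TopologicalSpace Y]

/-- Some direction `v` is such that `B` contains all pairs of points of `C` which are close to `r`
and whose first components differ by a small positive multiple of `v`. -/
def CapturesNear (B : Set ((E × Y) × (E × Y))) (C : Set (E × Y))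
    (r : (E × Y) × (E × Y)) : Prop :=
  ∃ v : E, ∀ᶠ q : ℝ × ((E × Y) × (E × Y)) in 𝓝[>] 0 ×ˢ 𝓝 r,
    q.2.1 ∈ C → q.2.2 ∈ C → q.2.2.1 = q.1 • v + q.2.1.1 → q.2 ∈ B

lemma CapturesNear.mono {B B' : Set ((E × Y) × (E × Y))} {C : Set (E × Y)}
    {r : (E × Y) × (E × Y)} (hBB' : B ⊆ B') : CapturesNear B C r → CapturesNear B' C r :=
  fun ⟨v, hv⟩ => ⟨v, hv.mono fun _ hq h₁ h₂ h => hBB' (hq h₁ h₂ h)⟩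

end CapturesNear

section Directional

variable {E Y : Type*} [NormedAddCommGroup E] [NormedSpace ℝ E] [FiniteDimensional ℝ E]
  [MeasurableSpace E] [BorelSpace E] [MeasurableSpace Y] {μ : Measure E} [IsFiniteMeasure μ]
  {κ : Kernel E Y} [IsMarkovKernel κ] {B : Set ((E × Y) × (E × Y))}

lemma eventually_exists_notMem_of_pairNegligible (ν : Measure E) [ν.IsAddHaarMeasure] (hac : μ ≪ ν)
    (hB : PairNegligible (μ ⊗ₘ κ) B) {Q Q' : Set (E × Y)} (hQ : MeasurableSet Q)
    (hQ' : MeasurableSet Q') (hpos : fiberPairs μ κ measurable_id (Q ×ˢ Q') ≠ 0) :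
    ∀ᶠ u in 𝓝 (0 : E), ∃ r : (E × Y) × (E × Y), r.1 ∈ Q ∧ r.2 ∈ Q' ∧ r.2.1 = u + r.1.1 ∧ r ∉ B := by
  have hmQ : Measurable fun z => κ z (Prod.mk z ⁻¹' Q) := Kernel.measurable_kernel_prodMk_left hQ
  have hmQ' : Measurable fun z => κ z (Prod.mk z ⁻¹' Q') := Kernel.measurable_kernel_prodMk_left hQ'
  have hD : MeasurableSet {z | κ z (Prod.mk z ⁻¹' Q) ≠ 0 ∧ κ z (Prod.mk z ⁻¹' Q') ≠ 0} :=
    (measurableSet_eq_fun hmQ measurable_const).compl.inter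
      (measurableSet_eq_fun hmQ' measurable_const).compl
  filter_upwards [eventually_exists_add_map_le hac hD
    (measure_fiber_ne_zero_of_fiberPairs_prod_ne_zero hQ hQ' hpos)] with u ⟨ξ, hξ, hle, hmem⟩
  have : IsFiniteMeasure ξ := isFiniteMeasure_of_le μ ((Measure.le_add_right le_rfl).trans hle)
  have hτ : Measurable (u + · : E → E) := measurable_const_add u
  by_contra! hsub
  have hnull : fiberPairs ξ κ hτ (Q ×ˢ Q') = 0 := by
    refine measure_mono_null_ae ?_ (hB _ (pairSum_fiberPairs_le hτ hle))
    filter_upwards [ae_fiberPairs_source_eq hτ] with r hr hrQ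
    exact hsub r hrQ.1 hrQ.2 hr
  rw [fiberPairs_prod hτ hQ hQ'] at hnull
  have hfalse : ∀ᵐ _ ∂ξ, False := by
    filter_upwards [(lintegral_eq_zero_iff (hmQ.mul (hmQ'.comp hτ))).1 hnull, hmem] with z hz hzD
    exact mul_ne_zero hzD.1.1 hzD.2.2 hz
  simp [hξ] at hfalse

lemma fiberPairs_capturesNear_eq_zero [TopologicalSpace Y] [SecondCountableTopology Y]
    [OpensMeasurableSpace Y] (ν : Measure E) [ν.IsAddHaarMeasure] (hac : μ ≪ ν)
    (hB : PairNegligible (μ ⊗ₘ κ) B) {C : Set (E × Y)} (hC : MeasurableSet C) :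
    fiberPairs μ κ measurable_id {r | r.1 ∈ C ∧ r.2 ∈ C ∧ CapturesNear B C r} = 0 := by
  by_contra hpos
  obtain ⟨r, ⟨-, -, v, hv⟩, hr⟩ := exists_mem_forall_mem_nhdsWithin_pos_measure hpos
  obtain ⟨T, hT, U, hU, hTU⟩ := eventually_prod_iff.1 hv
  obtain ⟨U₁, U₂, hU₁, hrU₁, hU₂, hrU₂, hUU⟩ := mem_nhds_prod_iff'.1 hU
  have hpos' : fiberPairs μ κ measurable_id ((U₁ ∩ C) ×ˢ (U₂ ∩ C)) ≠ 0 := by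
    refine ((hr _ (inter_mem_nhdsWithin _
      (prod_mem_nhds (hU₁.mem_nhds hrU₁) (hU₂.mem_nhds hrU₂)))).trans_le (measure_mono ?_)).ne'
    exact fun s hs => ⟨⟨hs.2.1, hs.1.1⟩, ⟨hs.2.2, hs.1.2.1⟩⟩
  have htend : Tendsto (fun t : ℝ => t • v) (𝓝[>] 0) (𝓝 0) :=
    (Continuous.tendsto' (by fun_prop) 0 0 (zero_smul ℝ v)).mono_left nhdsWithin_le_nhds
  obtain ⟨t, ht, s, ⟨hs₁, hs₁C⟩, ⟨hs₂, hs₂C⟩, hst, hsB⟩ := (hT.and <| htend.eventually <|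
    eventually_exists_notMem_of_pairNegligible ν hac hB (hU₁.measurableSet.inter hC)
      (hU₂.measurableSet.inter hC) hpos').exists
  exact hsB (hTU ht (hUU ⟨hs₁, hs₂⟩) hs₁C hs₂C hst)

end Directional

/-! ### Local geometry of the costs -/

section SqEDist

variable {E F : Type*} [PseudoMetricSpace F] {π : E → F} {r : (E × E) × (E × E)}

lemma sqEDist_add_sqEDist_eq_coe (p p' : E × E) : sqEDist π p + sqEDist π p' =
    ((nndist (π p.1) (π p.2) ^ 2 + nndist (π p'.1) (π p'.2) ^ 2 : ℝ≥0) : ℝ≥0∞) := by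
  simp only [sqEDist, edist_nndist, ENNReal.coe_add, ENNReal.coe_pow]

lemma mem_swapGain_sqEDist : r ∈ swapGain (sqEDist π) ↔
    dist (π r.1.1) (π r.2.2) ^ 2 + dist (π r.2.1) (π r.1.2) ^ 2 <
      dist (π r.1.1) (π r.1.2) ^ 2 + dist (π r.2.1) (π r.2.2) ^ 2 := by
  simp only [swapGain, swapTargets, mem_ofPred_eq, sqEDist_add_sqEDist_eq_coe, ENNReal.coe_lt_coe,
    dist_nndist]
  norm_cast

lemma mem_swapTie_sqEDist : r ∈ swapTie (sqEDist π) ↔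
    dist (π r.1.1) (π r.2.2) ^ 2 + dist (π r.2.1) (π r.1.2) ^ 2 =
      dist (π r.1.1) (π r.1.2) ^ 2 + dist (π r.2.1) (π r.2.2) ^ 2 := by
  simp only [swapTie, swapTargets, mem_ofPred_eq, sqEDist_add_sqEDist_eq_coe, ENNReal.coe_inj,
    dist_nndist]
  norm_cast

end SqEDist

section NormGeometry

variable {E : Type*} [NormedAddCommGroup E]

lemma norm_mul_norm_add_sub_norm_lt {d d' : E} (hle : ‖d'‖ ≤ ‖d‖)
    (h : ¬(‖d‖ = ‖d'‖ ∧ ‖d + d'‖ = ‖d‖ + ‖d'‖)) : ‖d'‖ * (‖d' + d‖ - ‖d'‖) < ‖d‖ ^ 2 := by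
  have htri : ‖d' + d‖ ≤ ‖d'‖ + ‖d‖ := norm_add_le d' d
  have hd' : 0 ≤ ‖d'‖ := norm_nonneg d'
  rcases hle.lt_or_eq with hlt | heq
  · nlinarith
  · have hne : ‖d' + d‖ ≠ ‖d'‖ + ‖d‖ := fun he => h ⟨heq.symm, by rwa [add_comm d, add_comm ‖d‖]⟩
    have hlt := htri.lt_of_ne hne
    have hpos : 0 < ‖d'‖ := hd'.lt_of_ne fun h0 => hne <| by
      rw [norm_eq_zero.1 h0.symm, zero_add, norm_zero, zero_add]
    nlinarith

variable [NormedSpace ℝ E]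

lemma norm_sub_smul_le (a d : E) {t : ℝ} (ht₀ : 0 ≤ t) (ht₁ : t ≤ 1) :
    ‖a - t • d‖ ≤ (1 - t) * ‖a‖ + t * ‖a - d‖ :=
  calc ‖a - t • d‖ = ‖(1 - t) • a + t • (a - d)‖ := by congr 1; module
    _ ≤ ‖(1 - t) • a‖ + ‖t • (a - d)‖ := norm_add_le _ _
    _ = (1 - t) * ‖a‖ + t * ‖a - d‖ := by
      rw [norm_smul, norm_smul, Real.norm_of_nonneg ht₀, Real.norm_of_nonneg (sub_nonneg.2 ht₁)]

lemma eventually_norm_sub_smul_sq_add_norm_add_smul_sq_lt {d d' : E}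
    (h : ‖d'‖ * (‖d' + d‖ - ‖d'‖) < ‖d‖ ^ 2) :
    ∀ᶠ q : ℝ × (E × E) in 𝓝[>] 0 ×ˢ 𝓝 (d, d'),
      ‖q.2.1 - q.1 • d‖ ^ 2 + ‖q.2.2 + q.1 • d‖ ^ 2 < ‖q.2.1‖ ^ 2 + ‖q.2.2‖ ^ 2 := by
  let slope (q : ℝ × (E × E)) : ℝ :=
    2 * (‖q.2.1‖ * (‖q.2.1 - d‖ - ‖q.2.1‖) + ‖q.2.2‖ * (‖q.2.2 + d‖ - ‖q.2.2‖)) +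
      q.1 * ((‖q.2.1 - d‖ - ‖q.2.1‖) ^ 2 + (‖q.2.2 + d‖ - ‖q.2.2‖) ^ 2)
  have hslope : ∀ᶠ q in 𝓝[>] 0 ×ˢ 𝓝 (d, d'), slope q < 0 := by
    have hcont : Continuous slope := by fun_prop
    have hlim : Tendsto slope (𝓝[>] 0 ×ˢ 𝓝 (d, d')) (𝓝 (slope (0, d, d'))) :=
      (hcont.tendsto _).mono_left <|
        (Filter.prod_mono_left _ nhdsWithin_le_nhds).trans nhds_prod_eq.ge
    refine hlim.eventually_lt_const ?_
    simp only [slope, sub_self, norm_zero]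
    linarith
  have ht : ∀ᶠ q : ℝ × (E × E) in 𝓝[>] 0 ×ˢ 𝓝 (d, d'), q.1 ∈ Ioo 0 1 :=
    tendsto_fst.eventually (Ioo_mem_nhdsGT one_pos)
  filter_upwards [hslope, ht] with ⟨t, a, a'⟩ hneg ⟨ht₀, ht₁⟩
  have ha : ‖a - t • d‖ ≤ ‖a‖ + t * (‖a - d‖ - ‖a‖) := by
    linarith [norm_sub_smul_le a d ht₀.le ht₁.le]
  have ha' : ‖a' + t • d‖ ≤ ‖a'‖ + t * (‖a' + d‖ - ‖a'‖) := by
    have := norm_sub_smul_le a' (-d) ht₀.le ht₁.le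
    rw [smul_neg, sub_neg_eq_add, sub_neg_eq_add] at this
    linarith
  calc ‖a - t • d‖ ^ 2 + ‖a' + t • d‖ ^ 2
      ≤ (‖a‖ + t * (‖a - d‖ - ‖a‖)) ^ 2 + (‖a'‖ + t * (‖a' + d‖ - ‖a'‖)) ^ 2 := by gcongr
    _ = ‖a‖ ^ 2 + ‖a'‖ ^ 2 + t * slope (t, a, a') := by simp only [slope]; ring
    _ < ‖a‖ ^ 2 + ‖a'‖ ^ 2 := add_lt_of_neg_right _ (mul_neg_of_pos_of_neg ht₀ hneg)

lemma capturesNear_swapGain_sqEDist {r : (E × E) × (E × E)}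
    (h : ¬(‖r.1.2 - r.1.1‖ = ‖r.2.2 - r.2.1‖ ∧
      ‖(r.1.2 - r.1.1) + (r.2.2 - r.2.1)‖ = ‖r.1.2 - r.1.1‖ + ‖r.2.2 - r.2.1‖)) :
    CapturesNear (swapGain (sqEDist id)) univ r := by
  have hcont : Continuous fun s : (E × E) × (E × E) => (s.1.2 - s.1.1, s.2.2 - s.2.1) := by
    fun_prop
  have hmem {t : ℝ} {v : E} {s : (E × E) × (E × E)} (hs : s.2.1 = t • v + s.1.1)
      (hlt : ‖s.1.2 - s.1.1 - t • v‖ ^ 2 + ‖s.2.2 - s.2.1 + t • v‖ ^ 2 <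
        ‖s.1.2 - s.1.1‖ ^ 2 + ‖s.2.2 - s.2.1‖ ^ 2) : s ∈ swapGain (sqEDist id) := by
    rw [show s.1.2 - s.1.1 - t • v = s.1.2 - s.2.1 by rw [hs]; abel,
      show s.2.2 - s.2.1 + t • v = s.2.2 - s.1.1 by rw [hs]; abel] at hlt
    simpa only [mem_swapGain_sqEDist, id, dist_eq_norm', add_comm] using hlt
  rcases le_total ‖r.2.2 - r.2.1‖ ‖r.1.2 - r.1.1‖ with hle | hle
  · refine ⟨r.1.2 - r.1.1, ?_⟩
    filter_upwards [(tendsto_id.prodMap (hcont.tendsto r)).eventually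
      (eventually_norm_sub_smul_sq_add_norm_add_smul_sq_lt
        (norm_mul_norm_add_sub_norm_lt hle h))] with ⟨t, s⟩ hlt _ _ hs
    exact hmem hs hlt
  · refine ⟨-(r.2.2 - r.2.1), ?_⟩
    rw [eq_comm, add_comm (r.1.2 - r.1.1), add_comm ‖r.1.2 - r.1.1‖] at h
    filter_upwards [(tendsto_id.prodMap ((continuous_swap.comp hcont).tendsto r)).eventually
      (eventually_norm_sub_smul_sq_add_norm_add_smul_sq_lt
        (norm_mul_norm_add_sub_norm_lt hle h))] with ⟨t, s⟩ hlt _ _ hs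
    refine hmem hs ?_
    rw [smul_neg, sub_neg_eq_add, ← sub_eq_add_neg, add_comm, add_comm (‖s.1.2 - s.1.1‖ ^ 2)]
    exact hlt

end NormGeometry

section Coordinates

lemma abs_sub_le_abs_of_mul_pos {b b' y y' α α' : ℝ} (h : |b - y| ≤ |α|) (h' : |b' - y'| ≤ |α'|)
    (hα : |α - α'| ≤ |b - b'|) (hpos : 0 < (y' - y) * (b - b')) : |b' - y| ≤ |α'| := by
  have htri : |α| - |α'| ≤ |b - b'| := (abs_sub_abs_le_abs_sub α α').trans hα
  rw [abs_le] at h h' ⊢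
  rcases mul_pos_iff.1 hpos with ⟨hy, hb⟩ | ⟨hy, hb⟩
  · rw [abs_of_pos hb] at htri
    constructor <;> linarith
  · rw [abs_of_neg hb] at htri
    constructor <;> linarith

variable {E : Type*}

lemma mem_swapTie_inter_swapGain_of_dominant [PseudoMetricSpace E] {p q : E → ℝ}
    (hpq : ∀ x y, dist x y = max (dist (p x) (p y)) (dist (q x) (q y))) {s : (E × E) × (E × E)}
    (h₁ : dist (q s.1.1) (q s.1.2) ≤ dist (p s.1.1) (p s.1.2))
    (h₂ : dist (q s.2.1) (q s.2.2) ≤ dist (p s.2.1) (p s.2.2)) (hp : p s.2.1 = p s.1.1)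
    (hle : |p s.1.2 - p s.2.2| ≤ |q s.1.2 - q s.2.2|)
    (hpos : 0 < (q s.2.1 - q s.1.1) * (q s.1.2 - q s.2.2)) :
    s ∈ swapTie (sqEDist id) ∩ swapTie (sqEDist p) ∩ swapGain (sqEDist q) := by
  obtain ⟨⟨z, w⟩, z', w'⟩ := s
  dsimp only at h₁ h₂ hp hle hpos
  have habs₁ : |q w - q z| ≤ |p w - p z| := by rwa [dist_comm, dist_comm (p z)] at h₁
  have habs₂ : |q w' - q z'| ≤ |p w' - p z| := by rwa [dist_comm, dist_comm (p z'), hp] at h₂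
  have hw' : dist (q z) (q w') ≤ dist (p z) (p w') := by
    rw [dist_comm, dist_comm (p z)]
    exact abs_sub_le_abs_of_mul_pos habs₁ habs₂ (by simpa using hle) hpos
  have hw : dist (q z') (q w) ≤ dist (p z) (p w) := by
    rw [dist_comm, dist_comm (p z)]
    exact abs_sub_le_abs_of_mul_pos habs₂ habs₁ (by simpa [abs_sub_comm] using hle) (by linarith)
  rw [hp] at h₂
  refine ⟨⟨mem_swapTie_sqEDist.2 ?_, mem_swapTie_sqEDist.2 ?_⟩, mem_swapGain_sqEDist.2 ?_⟩
  · dsimp only [id]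
    rw [hpq z w', hpq z' w, hpq z w, hpq z' w', hp, max_eq_left hw', max_eq_left hw,
      max_eq_left h₁, max_eq_left h₂, add_comm]
  · dsimp only
    rw [hp, add_comm]
  · simp only [Real.dist_eq, sq_abs]
    linarith

lemma capturesNear_swapTie_inter_swapGain_of_dominant [NormedAddCommGroup E]
    [NormedSpace ℝ E] {p q : E →L[ℝ] ℝ}
    (hpq : ∀ x y, dist x y = max (dist (p x) (p y)) (dist (q x) (q y))) {r : (E × E) × (E × E)}
    (hp : p r.1.2 = p r.2.2) (hq : q r.1.2 ≠ q r.2.2) :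
    CapturesNear (swapTie (sqEDist id) ∩ swapTie (sqEDist p) ∩ swapGain (sqEDist q))
      {x | dist (q x.1) (q x.2) ≤ dist (p x.1) (p x.2)} r := by
  refine ⟨r.1.2 - r.2.2, ?_⟩
  have hq' : 0 < |q r.1.2 - q r.2.2| := abs_pos.2 (sub_ne_zero.2 hq)
  have hle : ∀ᶠ s in 𝓝 r, |p s.1.2 - p s.2.2| < |q s.1.2 - q s.2.2| :=
    ContinuousAt.eventually_lt (by fun_prop) (by fun_prop) (by simpa [hp] using hq')
  have hpos : ∀ᶠ s in 𝓝 r, 0 < (q r.1.2 - q r.2.2) * (q s.1.2 - q s.2.2) :=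
    ContinuousAt.eventually_lt (by fun_prop) (by fun_prop) (mul_self_pos.2 (sub_ne_zero.2 hq))
  filter_upwards [tendsto_snd.eventually (hle.and hpos),
    tendsto_fst.eventually self_mem_nhdsWithin] with ⟨t, s⟩ ⟨hs, hspos⟩ ht hs₁ hs₂ hst
  refine mem_swapTie_inter_swapGain_of_dominant hpq hs₁ hs₂ ?_ hs.le ?_
  · rw [hst, map_add, map_smul, map_sub, hp, sub_self, smul_zero, zero_add]
  · rw [hst, map_add, map_smul, map_sub, smul_eq_mul, add_sub_cancel_right, mul_assoc]
    exact mul_pos ht hspos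

end Coordinates

section Plane

lemma eq_and_abs_eq_norm_of_norm_add_eq {d d' : ℝ × ℝ} (h : ‖d‖ = ‖d'‖)
    (hadd : ‖d + d'‖ = ‖d‖ + ‖d'‖) :
    (d.1 = d'.1 ∧ |d.1| = ‖d‖) ∨ (d.2 = d'.2 ∧ |d.2| = ‖d‖) := by
  have hreal {x y N : ℝ} (hx : |x| ≤ N) (hy : |y| ≤ N) (hxy : |x + y| = N + N) :
      x = y ∧ |x| = N := by
    grind
  rw [← h] at hadd
  have hle₁ : |d'.1| ≤ ‖d‖ := h ▸ norm_fst_le d'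
  have hle₂ : |d'.2| ≤ ‖d‖ := h ▸ norm_snd_le d'
  rcases max_choice ‖(d + d').1‖ ‖(d + d').2‖ with hmax | hmax
  · exact .inl (hreal (norm_fst_le d) hle₁ (hmax.symm.trans hadd))
  · exact .inr (hreal (norm_snd_le d) hle₂ (hmax.symm.trans hadd))

/-- The transported points of the plane whose displacement attains its sup norm horizontally. -/
def horizontallyDominated : Set ((ℝ × ℝ) × (ℝ × ℝ)) :=
  {p | dist p.1.2 p.2.2 ≤ dist p.1.1 p.2.1}

/-- The transported points of the plane whose displacement attains its sup norm vertically. -/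
def verticallyDominated : Set ((ℝ × ℝ) × (ℝ × ℝ)) :=
  {p | dist p.1.1 p.2.1 ≤ dist p.1.2 p.2.2}

lemma mem_horizontallyDominated {z w : ℝ × ℝ} (h : |(w - z).1| = ‖w - z‖) :
    (z, w) ∈ horizontallyDominated := by
  change dist z.2 w.2 ≤ dist z.1 w.1
  rw [dist_comm, dist_comm z.1]
  exact (norm_snd_le (w - z)).trans_eq h.symm

lemma mem_verticallyDominated {z w : ℝ × ℝ} (h : |(w - z).2| = ‖w - z‖) :
    (z, w) ∈ verticallyDominated := by
  change dist z.1 w.1 ≤ dist z.2 w.2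
  rw [dist_comm, dist_comm z.2]
  exact (norm_fst_le (w - z)).trans_eq h.symm

lemma capturesNear_horizontallyDominated {r : ((ℝ × ℝ) × (ℝ × ℝ)) × ((ℝ × ℝ) × (ℝ × ℝ))}
    (hne : r.1.2 ≠ r.2.2) (hfst : r.1.2.1 = r.2.2.1) :
    CapturesNear lexSwapGain horizontallyDominated r :=
  (capturesNear_swapTie_inter_swapGain_of_dominant (p := .fst ℝ ℝ ℝ) (q := .snd ℝ ℝ ℝ)
    (fun _ _ => rfl) hfst fun hsnd => hne (Prod.ext hfst hsnd)).mono fun _ hs => .inr hs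

lemma capturesNear_verticallyDominated {r : ((ℝ × ℝ) × (ℝ × ℝ)) × ((ℝ × ℝ) × (ℝ × ℝ))}
    (hne : r.1.2 ≠ r.2.2) (hsnd : r.1.2.2 = r.2.2.2) :
    CapturesNear lexSwapGain verticallyDominated r :=
  (capturesNear_swapTie_inter_swapGain_of_dominant (p := .snd ℝ ℝ ℝ) (q := .fst ℝ ℝ ℝ)
    (fun _ _ => max_comm _ _) hsnd fun hfst => hne (Prod.ext hfst hsnd)).mono
    fun _ hs => .inl (.inr ⟨hs.1.1, hs.2⟩)

lemma capturesNear_lexSwapGain {z w w' : ℝ × ℝ} (hne : w ≠ w') :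
    CapturesNear lexSwapGain univ ((z, w), (z, w')) ∨
      ((z, w) ∈ horizontallyDominated ∧ (z, w') ∈ horizontallyDominated ∧
        CapturesNear lexSwapGain horizontallyDominated ((z, w), (z, w'))) ∨
      ((z, w) ∈ verticallyDominated ∧ (z, w') ∈ verticallyDominated ∧
        CapturesNear lexSwapGain verticallyDominated ((z, w), (z, w'))) := by
  by_cases h : ‖w - z‖ = ‖w' - z‖ ∧ ‖(w - z) + (w' - z)‖ = ‖w - z‖ + ‖w' - z‖
  · rcases eq_and_abs_eq_norm_of_norm_add_eq h.1 h.2 with ⟨heq, hdom⟩ | ⟨heq, hdom⟩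
    · exact .inr <| .inl ⟨mem_horizontallyDominated hdom,
        mem_horizontallyDominated (heq ▸ hdom.trans h.1),
        capturesNear_horizontallyDominated hne (sub_left_injective heq)⟩
    · exact .inr <| .inr ⟨mem_verticallyDominated hdom,
        mem_verticallyDominated (heq ▸ hdom.trans h.1),
        capturesNear_verticallyDominated hne (sub_left_injective heq)⟩
  · exact .inl ((capturesNear_swapGain_sqEDist h).mono fun _ hs => .inl (.inl hs))

end Plane

/-! ### Plans concentrated on graphs -/

section Graph

lemma exists_measurable_ae_snd_eq {X E : Type*} [MeasurableSpace X] [NormedAddCommGroup E]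
    [NormedSpace ℝ E] [CompleteSpace E] [SecondCountableTopology E] [MeasurableSpace E]
    [BorelSpace E] {μ : Measure X} [SFinite μ] {κ : Kernel X E} [IsMarkovKernel κ]
    (h : ∀ᵐ r ∂fiberPairs μ κ measurable_id, r.1.2 = r.2.2) :
    ∃ T : X → E, Measurable T ∧ ∀ᵐ p ∂(μ ⊗ₘ κ), p.2 = T p.1 := by
  have hT : Measurable fun z => ∫ w, w ∂κ z :=
    (stronglyMeasurable_id : StronglyMeasurable fun w : E => w).integral_kernel.measurable
  refine ⟨_, hT, Measure.ae_compProd_of_ae_ae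
    (measurableSet_eq_fun measurable_snd (hT.comp measurable_fst)) ?_⟩
  have hpairs : ∀ᵐ q ∂(μ ⊗ₘ (κ ×ₖ κ.comap id measurable_id)), q.2.1 = q.2.2 :=
    ae_of_ae_map (by fun_prop) h
  filter_upwards [Measure.ae_ae_of_ae_compProd hpairs] with z hz
  rw [Kernel.prod_apply] at hz
  obtain ⟨w, hw⟩ : ∃ w, ∀ᵐ w' ∂κ z, w = w' := (Measure.ae_ae_of_ae_prod hz).exists
  have hmean : ∫ w', w' ∂κ z = w := by
    rw [integral_congr_ae (hw.mono fun _ => Eq.symm)]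
    simp
  filter_upwards [hw] with w' hw'
  rw [hmean, hw']

variable {X Y : Type*} [MeasurableSpace X] [MeasurableSpace Y]

lemma eq_map_fst_map_of_ae_snd_eq {γ : Measure (X × Y)} {T : X → Y} (hT : Measurable T)
    (h : ∀ᵐ p ∂γ, p.2 = T p.1) : γ = (γ.map Prod.fst).map fun z => (z, T z) := by
  rw [Measure.map_map (by fun_prop) measurable_fst]
  calc γ = γ.map id := Measure.map_id.symm
    _ = γ.map ((fun z => (z, T z)) ∘ Prod.fst) :=
        Measure.map_congr (h.mono fun p hp => Prod.ext (Eq.refl p.1) hp)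

lemma subsingleton_of_convex_of_forall_exists_ae_snd_eq {S : Set (Measure (X × Y))}
    {μ : Measure X} (hS : Convex ℝ≥0∞ S) (hfst : ∀ γ ∈ S, γ.map Prod.fst = μ)
    (hgraph : ∀ γ ∈ S, ∃ T : X → Y, Measurable T ∧ ∀ᵐ p ∂γ, p.2 = T p.1) : S.Subsingleton := by
  intro γ hγ γ' hγ'
  obtain ⟨T, hT, hae⟩ := hgraph _ (hS hγ hγ' zero_le zero_le ENNReal.inv_two_add_inv_two)
  obtain ⟨h, h'⟩ := ae_add_measure_iff.1 hae
  rw [Measure.ae_ennreal_smul_measure_iff (by simp)] at h h'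
  rw [eq_map_fst_map_of_ae_snd_eq hT h, eq_map_fst_map_of_ae_snd_eq hT h', hfst γ hγ, hfst γ' hγ']

end Graph

section Couplings

variable {μ ν : Measure (ℝ × ℝ)} {γ : Measure ((ℝ × ℝ) × (ℝ × ℝ))}

lemma ae_fiberPairs_target_eq [IsFiniteMeasure μ] {κ : Kernel (ℝ × ℝ) (ℝ × ℝ)} [IsMarkovKernel κ]
    (hac : μ ≪ volume) (h : PairNegligible (μ ⊗ₘ κ) lexSwapGain) :
    ∀ᵐ r ∂fiberPairs μ κ measurable_id, r.1.2 = r.2.2 := by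
  have hnull {C : Set ((ℝ × ℝ) × (ℝ × ℝ))} (hC : MeasurableSet C) :
      ∀ᵐ r ∂fiberPairs μ κ measurable_id,
        ¬(r.1 ∈ C ∧ r.2 ∈ C ∧ CapturesNear lexSwapGain C r) := by
    simpa [ae_iff] using fiberPairs_capturesNear_eq_zero volume hac h hC
  filter_upwards [ae_fiberPairs_source_eq measurable_id, hnull .univ,
    hnull (C := horizontallyDominated) (measurableSet_le (by fun_prop) (by fun_prop)),
    hnull (C := verticallyDominated) (measurableSet_le (by fun_prop) (by fun_prop))]
    with ⟨⟨z, w⟩, z', w'⟩ hz huniv hhor hver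
  obtain rfl : z' = z := hz
  by_contra hne
  rcases capturesNear_lexSwapGain (z := z') hne with hcap | hcap | hcap
  · exact huniv ⟨trivial, trivial, hcap⟩
  · exact hhor hcap
  · exact hver hcap

lemma exists_measurable_ae_snd_eq_of_mem_opt3 [IsFiniteMeasure μ] (hac : μ ≪ volume)
    (hγ : γ ∈ Opt3 μ ν) (hfin : costSup γ ≠ ⊤) :
    ∃ T : ℝ × ℝ → ℝ × ℝ, Measurable T ∧ ∀ᵐ p ∂γ, p.2 = T p.1 := by
  obtain ⟨hprob, hfst, -⟩ := opt3_subset_couplings hγ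
  have hκ : μ ⊗ₘ γ.condKernel = γ := hfst ▸ γ.disintegrate γ.condKernel
  have hneg : PairNegligible (μ ⊗ₘ γ.condKernel) lexSwapGain :=
    hκ.symm ▸ pairNegligible_lexSwapGain hγ hfin
  exact hκ ▸ exists_measurable_ae_snd_eq (ae_fiberPairs_target_eq hac hneg)

lemma lintegral_edist_sq_lt_top {E : Type*} [NormedAddCommGroup E] [MeasurableSpace E]
    [OpensMeasurableSpace E] {γ : Measure (E × E)}
    (hfst : ∫⁻ z, (‖z‖₊ : ℝ≥0∞) ^ 2 ∂γ.map Prod.fst < ⊤)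
    (hsnd : ∫⁻ z, (‖z‖₊ : ℝ≥0∞) ^ 2 ∂γ.map Prod.snd < ⊤) :
    ∫⁻ p, edist p.1 p.2 ^ 2 ∂γ < ⊤ := by
  have hnorm : Measurable fun z : E => (‖z‖₊ : ℝ≥0∞) ^ 2 := by fun_prop
  rw [lintegral_map hnorm measurable_fst] at hfst
  rw [lintegral_map hnorm measurable_snd] at hsnd
  calc ∫⁻ p, edist p.1 p.2 ^ 2 ∂γ
      ≤ ∫⁻ p, 2 * ((‖p.1‖₊ : ℝ≥0∞) ^ 2 + (‖p.2‖₊ : ℝ≥0∞) ^ 2) ∂γ := by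
        refine lintegral_mono fun p => ?_
        rw [edist_nndist, nndist_eq_nnnorm]
        norm_cast
        exact ENNReal.coe_le_coe.2 <|
          (pow_le_pow_left' (nnnorm_sub_le p.1 p.2) 2).trans add_sq_le
    _ = 2 * (∫⁻ p, (‖p.1‖₊ : ℝ≥0∞) ^ 2 ∂γ + ∫⁻ p, (‖p.2‖₊ : ℝ≥0∞) ^ 2 ∂γ) := by
        rw [lintegral_const_mul _ (by fun_prop), lintegral_add_left (by fun_prop)]
    _ < ⊤ := ENNReal.mul_lt_top (by simp) (ENNReal.add_lt_top.2 ⟨hfst, hsnd⟩)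

end Couplings

theorem opt3_singleton_induced_by_map_general
    (μ0 μ1 : Measure (ℝ × ℝ)) [IsProbabilityMeasure μ0] [IsProbabilityMeasure μ1]
    (hfin : ∃ γ ∈ Couplings μ0 μ1, costSup γ < ⊤) (hac : μ0 ≪ (volume : Measure (ℝ × ℝ))) :
    ∃ T : ℝ × ℝ → ℝ × ℝ, Measurable T ∧
      Opt3 μ0 μ1 = {μ0.map (fun z => (z, T z))} := by
  obtain ⟨γ', hγ', hγ'fin⟩ := hfin
  have hfst : ∀ γ ∈ Opt3 μ0 μ1, γ.map Prod.fst = μ0 := fun _ h => (opt3_subset_couplings h).2.1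
  have hgraph : ∀ γ ∈ Opt3 μ0 μ1, ∃ T : ℝ × ℝ → ℝ × ℝ, Measurable T ∧ ∀ᵐ p ∂γ, p.2 = T p.1 :=
    fun γ h => exists_measurable_ae_snd_eq_of_mem_opt3 hac h ((h.1.1.2 γ' hγ').trans_lt hγ'fin).ne
  have hsub : (Opt3 μ0 μ1).Subsingleton :=
    subsingleton_of_convex_of_forall_exists_ae_snd_eq (convex_opt3 μ0 μ1) hfst hgraph
  obtain ⟨γ, hγ⟩ := opt3_nonempty (μ := μ0) (ν := μ1)
  obtain ⟨T, hT, hae⟩ := hgraph γ hγ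
  refine ⟨T, hT, ?_⟩
  have hmap : γ = μ0.map fun z => (z, T z) :=
    hfst γ hγ ▸ eq_map_fst_map_of_ae_snd_eq hT hae
  exact hmap ▸ hsub.eq_singleton_of_mem hγ

/-- Proposition 3.2: if μ0 ≪ L², then Opt3(μ0,μ1) is a singleton, induced by an optimal map. -/
theorem opt3_singleton_induced_by_map
    (μ0 μ1 : Measure (ℝ × ℝ)) [IsProbabilityMeasure μ0] [IsProbabilityMeasure μ1]
    (hm0 : ∫⁻ z, (‖z‖₊ : ℝ≥0∞) ^ 2 ∂μ0 < ⊤) (hm1 : ∫⁻ z, (‖z‖₊ : ℝ≥0∞) ^ 2 ∂μ1 < ⊤)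
    (hac : μ0 ≪ (volume : Measure (ℝ × ℝ))) :
    ∃ T : ℝ × ℝ → ℝ × ℝ, Measurable T ∧
      Opt3 μ0 μ1 = {μ0.map (fun z => (z, T z))} :=
  opt3_singleton_induced_by_map_general μ0 μ1
    ⟨_, prod_mem_couplings, lintegral_edist_sq_lt_top (by simpa) (by simpa)⟩ hac

end
end

section
/- Let Γ ⊆ ℝ² × ℝ² satisfy the three cyclical monotonicity properties (i)–(iii), let T : ℝ² → ℝ² be a map with components T = (T1, T2), and let F = {(x,y) ∈ ℝ² : ((x,y), T(x,y)) ∈ Γ}. Then: (a) for all (x,y1), (x,y2) ∈ F with y1 ≠ y2 and T1(x,y1) = T1(x,y2), one has (T2(x,y1) − T2(x,y2))/(y1 − y2) ≥ 0; (b) for all (x1,y), (x2,y) ∈ F with x1 ≠ x2 and T2(x1,y) = T2(x2,y), one has (T1(x1,y) − T1(x2,y))/(x1 − x2) ≥ 0. -/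
/-!
For two points of `Γ` on a vertical line, exchanging the targets does not change the
first-coordinate cost, so property (ii) makes the second-coordinate assignment optimal for the
quadratic cost on the line. Expanding the squares, optimality for two points says that the
assignment preserves their order. Horizontal lines are handled in the same way by property (iii).
-/

open MeasureTheory ENNReal
open scoped Classical

noncomputable section

section Rearrangement

variable {R : Type*} [CommRing R] [LinearOrder R] [IsStrictOrderedRing R]

theorem monovaryOn_iff_sq_abs_sub_rearrangement {ι : Type*} {f g : ι → R} {s : Set ι} :
    MonovaryOn f g s ↔ ∀ i ∈ s, ∀ j ∈ s,
      |f i - g i| ^ 2 + |f j - g j| ^ 2 ≤ |f i - g j| ^ 2 + |f j - g i| ^ 2 := by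
  simp only [monovaryOn_iff_mul_rearrangement, sq_abs]
  exact ⟨fun h i hi j hj => by linarith [h hi hj], fun h i hi j hj => by linarith [h i hi j hj]⟩

theorem monotoneOn_iff_sq_abs_sub_rearrangement {f : R → R} {s : Set R} :
    MonotoneOn f s ↔ ∀ x ∈ s, ∀ y ∈ s,
      |x - f x| ^ 2 + |y - f y| ^ 2 ≤ |x - f y| ^ 2 + |y - f x| ^ 2 := by
  rw [← monovaryOn_id_iff, monovaryOn_comm, monovaryOn_iff_sq_abs_sub_rearrangement]
  rfl

end Rearrangement

theorem optimal_map_monotone_on_lines_general {R : Type*} [CommRing R] [LinearOrder R]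
    [IsStrictOrderedRing R] (Γ : Set ((R × R) × (R × R)))
    (hcyc2 : ∀ p ∈ Γ, ∀ q ∈ Γ,
      |p.1.1 - p.2.1| ^ 2 + |q.1.1 - q.2.1| ^ 2 = |q.1.1 - p.2.1| ^ 2 + |p.1.1 - q.2.1| ^ 2 →
      |p.1.2 - p.2.2| ^ 2 + |q.1.2 - q.2.2| ^ 2 ≤ |p.1.2 - q.2.2| ^ 2 + |q.1.2 - p.2.2| ^ 2)
    (hcyc3 : ∀ p ∈ Γ, ∀ q ∈ Γ,
      |p.1.2 - p.2.2| ^ 2 + |q.1.2 - q.2.2| ^ 2 = |q.1.2 - p.2.2| ^ 2 + |p.1.2 - q.2.2| ^ 2 →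
      |p.1.1 - p.2.1| ^ 2 + |q.1.1 - q.2.1| ^ 2 ≤ |p.1.1 - q.2.1| ^ 2 + |q.1.1 - p.2.1| ^ 2)
    (T : R × R → R × R) :
    (∀ x, MonotoneOn (fun y => (T (x, y)).2) {y | ((x, y), T (x, y)) ∈ Γ}) ∧
    (∀ y, MonotoneOn (fun x => (T (x, y)).1) {x | ((x, y), T (x, y)) ∈ Γ}) := by
  constructor
  · intro x
    exact monotoneOn_iff_sq_abs_sub_rearrangement.2 fun _ h₁ _ h₂ => hcyc2 _ h₁ _ h₂ rfl
  · intro y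
    exact monotoneOn_iff_sq_abs_sub_rearrangement.2 fun _ h₁ _ h₂ => hcyc3 _ h₁ _ h₂ rfl

/-- Lemma 3.3: monotonicity of the optimal map on vertical and horizontal lines, from the
three cyclical monotonicity properties of Γ. -/
theorem optimal_map_monotone_on_lines
    (Γ : Set ((ℝ × ℝ) × (ℝ × ℝ)))
    (hcyc1 : ∀ p ∈ Γ, ∀ q ∈ Γ,
      ‖p.1 - p.2‖ ^ 2 + ‖q.1 - q.2‖ ^ 2 ≤ ‖p.1 - q.2‖ ^ 2 + ‖q.1 - p.2‖ ^ 2)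
    (hcyc2 : ∀ p ∈ Γ, ∀ q ∈ Γ,
      |p.1.1 - p.2.1| ^ 2 + |q.1.1 - q.2.1| ^ 2 = |q.1.1 - p.2.1| ^ 2 + |p.1.1 - q.2.1| ^ 2 →
      |p.1.2 - p.2.2| ^ 2 + |q.1.2 - q.2.2| ^ 2 ≤ |p.1.2 - q.2.2| ^ 2 + |q.1.2 - p.2.2| ^ 2)
    (hcyc3 : ∀ p ∈ Γ, ∀ q ∈ Γ,
      |p.1.2 - p.2.2| ^ 2 + |q.1.2 - q.2.2| ^ 2 = |q.1.2 - p.2.2| ^ 2 + |p.1.2 - q.2.2| ^ 2 →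
      |p.1.1 - p.2.1| ^ 2 + |q.1.1 - q.2.1| ^ 2 ≤ |p.1.1 - q.2.1| ^ 2 + |q.1.1 - p.2.1| ^ 2)
    (T : ℝ × ℝ → ℝ × ℝ)
    (F : Set (ℝ × ℝ)) (hF : F = {z : ℝ × ℝ | (z, T z) ∈ Γ}) :
    (∀ x y1 y2 : ℝ, (x, y1) ∈ F → (x, y2) ∈ F → y1 ≠ y2 →
      (T (x, y1)).1 = (T (x, y2)).1 →
      ((T (x, y1)).2 - (T (x, y2)).2) / (y1 - y2) ≥ 0) ∧
    (∀ x1 x2 y : ℝ, (x1, y) ∈ F → (x2, y) ∈ F → x1 ≠ x2 →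
      (T (x1, y)).2 = (T (x2, y)).2 →
      ((T (x1, y)).1 - (T (x2, y)).1) / (x1 - x2) ≥ 0) := by
  subst hF
  obtain ⟨vertical, horizontal⟩ := optimal_map_monotone_on_lines_general Γ hcyc2 hcyc3 T
  constructor
  · intro x y1 y2 h1 h2 _ _
    simpa only [slope_def_field] using (vertical x).slope_nonneg h2 h1
  · intro x1 x2 y h1 h2 _ _
    simpa only [slope_def_field] using (horizontal y).slope_nonneg h2 h1

end
end

section
/- Let μ0 = ρ0·L2 and μ1 = ρ1·L2 be Borel probability measures on ℝ² with finite second moment, absolutely continuous with respect to the Lebesgue measure L2 with densities ρ0, ρ1. Let f : ℝ² → ℝ² be a Borel map with f_♯ μ0 = μ1 which is injective outside a set of L2-measure zero. Suppose the first component of f satisfies f1(x,y) = g(x) for a monotone nondecreasing function g : ℝ → ℝ, and that for L1-almost every x ∈ ℝ the function y ↦ f2(x,y) is monotone nondecreasing. Then for μ0-almost every (x,y) one has ρ1(f(x,y)) · g'(x) · (∂f2/∂y)(x,y) = ρ0(x,y), where g'(x) is the derivative of g (which exists at a.e. x by monotonicity) and (∂f2/∂y)(x,y) is the derivative of y ↦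 f2(x,y) (which for a.e. x exists at a.e. y by monotonicity). -/
open MeasureTheory ENNReal
open scoped Classical

noncomputable section

/-- Finiteness of the second moment of a measure on ℝ². -/
def FiniteSecondMoment (μ : Measure (ℝ × ℝ)) : Prop :=
  ∫⁻ z, (‖z‖₊ : ℝ≥0∞) ^ 2 ∂μ < ⊤

/-!
Let `T (x, y) = (g x, F x y)` with `g` and all sections `F x` nondecreasing. Off the set where
`deriv g = 0` the map `g` is injective, so Fubini and the change of variables formula in each
variable give `∫ φ` over `T '' E` as an integral over `E` with weight `g' * ∂F/∂y`, as long as the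
sections are differentiable and injective on `E`. Comparing with `T_♯ (ρ₀ dz) = ρ₁ dw` on every
such `E` identifies the densities.

The remaining points do not matter because the pushed forward measure is absolutely continuous:
`g` maps its critical points to a null set (Sard), and since every flat piece of `F x` contains a
rational `q`, `T` maps the flat pieces into the countably many null graphs of `g x ↦ F x q`.
Essential injectivity of `T` thus follows from monotonicity.
-/

section

open Filter Function Set Topology

section DenseSubset

variable {α β : Type*} [LinearOrder α] [TopologicalSpace α] [OrderTopology α] [DenselyOrdered α]
  {D : Set α} {h u : α → β}

theorem injOn_forall_mem_dense_ne_of_monotone [PartialOrder β] (hD : Dense D) (hh : Monotone h) :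
    InjOn h {y | ∀ q ∈ D, h y ≠ h q} := by
  have not_lt_of_eq {a b : α} (ha : ∀ q ∈ D, h a ≠ h q) (heq : h a = h b) : ¬ a < b := by
    intro hab
    obtain ⟨q, hq, haq, hqb⟩ := hD.exists_between hab
    exact ha q hq (le_antisymm (hh haq.le) (heq ▸ hh hqb.le))
  intro a ha b hb heq
  exact le_antisymm (not_lt.1 (not_lt_of_eq hb heq.symm)) (not_lt.1 (not_lt_of_eq ha heq))

theorem le_of_monotone_of_eventually_mem_dense [NoMaxOrder α] [Preorder β] [TopologicalSpace β]
    [ClosedIciTopology β] (hD : Dense D) (hh : Monotone h) {t : α} (hu : ContinuousAt u t)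
    (hle : ∀ᶠ x in 𝓝 t, x ∈ D → h x ≤ u x) : h t ≤ u t := by
  have hfreq : ∃ᶠ x in 𝓝[>] t, x ∈ D := by
    rw [(nhdsGT_basis t).frequently_iff]
    intro b hb
    obtain ⟨q, hq, htq⟩ := hD.exists_between hb
    exact ⟨q, htq, hq⟩
  refine ge_of_tendsto_of_frequently (hu.tendsto.mono_left nhdsWithin_le_nhds)
    ((hfreq.and_eventually ((hle.filter_mono nhdsWithin_le_nhds).and self_mem_nhdsWithin)).mono ?_)
  rintro x ⟨hx, hxu, htx⟩
  exact (hh (le_of_lt htx)).trans (hxu hx)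

theorem ge_of_monotone_of_eventually_mem_dense [NoMinOrder α] [Preorder β] [TopologicalSpace β]
    [ClosedIicTopology β] (hD : Dense D) (hh : Monotone h) {t : α} (hu : ContinuousAt u t)
    (hle : ∀ᶠ x in 𝓝 t, x ∈ D → u x ≤ h x) : u t ≤ h t :=
  le_of_monotone_of_eventually_mem_dense (α := αᵒᵈ) (β := βᵒᵈ) hD hh.dual hu hle

theorem abs_sub_le_of_monotone_of_eventually_mem_dense [NoMinOrder α] [NoMaxOrder α]
    (hD : Dense D) {h u v : α → ℝ} (hh : Monotone h) {t : α} (hu : ContinuousAt u t)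
    (hv : ContinuousAt v t) (hle : ∀ᶠ x in 𝓝 t, x ∈ D → |h x - u x| ≤ v x) :
    |h t - u t| ≤ v t := by
  have hupper : h t ≤ u t + v t :=
    le_of_monotone_of_eventually_mem_dense hD hh (hu.add hv) <| hle.mono fun x hx hxD => by
      rw [Pi.add_apply]
      linarith [(abs_le.1 (hx hxD)).2]
  have hlower : u t - v t ≤ h t :=
    ge_of_monotone_of_eventually_mem_dense hD hh (hu.sub hv) <| hle.mono fun x hx hxD => by
      rw [Pi.sub_apply]
      linarith [(abs_le.1 (hx hxD)).1]
  exact abs_le.2 ⟨by linarith, by linarith⟩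

end DenseSubset

section MonotoneFunctions

theorem deriv_eq_zero_of_monotone_of_mem_Icc {h : ℝ → ℝ} (hh : Monotone h) {a b c : ℝ}
    (hab : a < b) (heq : h a = h b) (hc : c ∈ Icc a b) : deriv h c = 0 := by
  by_cases hd : DifferentiableAt ℝ h c
  · have hconst : EqOn h (fun _ => h a) (Icc a b) := fun t ht =>
      le_antisymm (heq ▸ hh ht.2) (hh ht.1)
    rw [← hd.derivWithin (uniqueDiffOn_Icc hab c hc), derivWithin_congr hconst (hconst hc),
      derivWithin_fun_const, Pi.zero_apply]
  · exact deriv_zero_of_not_differentiableAt hd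

theorem injOn_deriv_ne_zero_of_monotone {h : ℝ → ℝ} (hh : Monotone h) :
    InjOn h {x | deriv h x ≠ 0} := by
  intro a ha b hb heq
  rcases lt_trichotomy a b with hab | hab | hab
  · exact absurd (deriv_eq_zero_of_monotone_of_mem_Icc hh hab heq (left_mem_Icc.2 hab.le)) ha
  · exact hab
  · exact absurd (deriv_eq_zero_of_monotone_of_mem_Icc hh hab heq.symm (left_mem_Icc.2 hab.le)) hb

theorem hasDerivAt_iff_tendsto_slope_rat_of_monotone {h : ℝ → ℝ} (hh : Monotone h) {y d : ℝ} :
    HasDerivAt h d y ↔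
      Tendsto (fun q : ℚ => (q : ℝ)⁻¹ * (h (y + q) - h y)) (𝓝[≠] 0) (𝓝 d) := by
  refine ⟨fun hd => ?_, fun hd => ?_⟩
  · refine (hasDerivAt_iff_tendsto_slope_zero.1 hd).comp ?_
    refine tendsto_nhdsWithin_iff.2 ⟨?_, ?_⟩
    · simpa using (Rat.continuous_coe_real.tendsto 0).mono_left nhdsWithin_le_nhds
    · filter_upwards [self_mem_nhdsWithin] with q hq using Rat.cast_ne_zero.2 hq
  · rw [hasDerivAt_iff_isLittleO_nhds_zero, Asymptotics.isLittleO_iff]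
    intro ε hε
    have hrat : ∀ᶠ q : ℚ in 𝓝 0, |h (y + q) - h y - q * d| ≤ ε * |(q : ℝ)| := by
      filter_upwards [eventually_nhdsWithin_iff.1 (Metric.tendsto_nhds.1 hd ε hε)] with q hq
      rcases eq_or_ne q 0 with rfl | hq0
      · simp
      · have hq0' : (q : ℝ) ≠ 0 := Rat.cast_ne_zero.2 hq0
        calc |h (y + q) - h y - q * d|
            = |(q : ℝ)⁻¹ * (h (y + q) - h y) - d| * |(q : ℝ)| := by
              rw [← abs_mul]; congr 1; field_simp
          _ ≤ ε * |(q : ℝ)| := by gcongr; exact (hq hq0).le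
    rw [Rat.isDenseEmbedding_coe_real.nhds_eq_comap, Rat.cast_zero, eventually_comap] at hrat
    have hmono : Monotone fun t => h (y + t) := fun s t hst => hh (by gcongr)
    filter_upwards [eventually_eventually_nhds.2 hrat] with t ht
    rw [smul_eq_mul, Real.norm_eq_abs, Real.norm_eq_abs, sub_sub]
    refine abs_sub_le_of_monotone_of_eventually_mem_dense Rat.denseRange_cast hmono
      (u := fun t => h y + t * d) (v := fun t => ε * |t|) (by fun_prop) (by fun_prop) ?_
    filter_upwards [ht] with x hx
    rintro ⟨q, rfl⟩
    exact sub_sub (h (y + q)) (h y) (q * d) ▸ hx q rfl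

end MonotoneFunctions

section MeasurableFamily

variable {α : Type*} [MeasurableSpace α] {F : α → ℝ → ℝ}

theorem measurableSet_differentiableAt_of_monotone (hF : Measurable (uncurry F))
    (hmono : ∀ a, Monotone (F a)) :
    MeasurableSet {z : α × ℝ | DifferentiableAt ℝ (F z.1) z.2} := by
  have hset : {z : α × ℝ | DifferentiableAt ℝ (F z.1) z.2} =
      {z | ∃ d, Tendsto (fun q : ℚ => (q : ℝ)⁻¹ * (uncurry F (z.1, z.2 + q) - uncurry F z))
        (𝓝[≠] 0) (𝓝 d)} := by
    ext z
    exact ⟨fun hd => ⟨_, (hasDerivAt_iff_tendsto_slope_rat_of_monotone (hmono z.1)).1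
      hd.hasDerivAt⟩, fun ⟨_, hd⟩ => ((hasDerivAt_iff_tendsto_slope_rat_of_monotone
      (hmono z.1)).2 hd).differentiableAt⟩
  rw [hset]
  exact measurableSet_exists_tendsto fun q => by fun_prop

theorem measurable_deriv_of_monotone (hF : Measurable (uncurry F))
    (hmono : ∀ a, Monotone (F a)) :
    Measurable fun z : α × ℝ => deriv (F z.1) z.2 := by
  set S : Set (α × ℝ) := {z | DifferentiableAt ℝ (F z.1) z.2}
  set slope : ℕ → α × ℝ → ℝ := fun n z =>
    (1 / ((n : ℝ) + 1))⁻¹ * (uncurry F (z.1, z.2 + 1 / ((n : ℝ) + 1)) - uncurry F z)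
  have hslope (n : ℕ) : Measurable (S.indicator (slope n)) :=
    Measurable.indicator (by fun_prop) (measurableSet_differentiableAt_of_monotone hF hmono)
  refine measurable_of_tendsto_metrizable hslope (tendsto_pi_nhds.2 fun z => ?_)
  by_cases hz : z ∈ S
  · simp only [indicator_of_mem hz]
    refine hz.hasDerivAt.tendsto_slope_zero_right.comp
      (tendsto_nhdsWithin_iff.2 ⟨tendsto_one_div_add_atTop_nhds_zero_nat, .of_forall fun n => ?_⟩)
    exact mem_Ioi.2 Nat.one_div_pos_of_nat
  · simp only [indicator_of_notMem hz]
    rw [deriv_zero_of_not_differentiableAt hz]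
    exact tendsto_const_nhds

theorem ae_differentiableAt_of_forall_monotone {μ : Measure α} (hF : Measurable (uncurry F))
    (hmono : ∀ a, Monotone (F a)) :
    ∀ᵐ z ∂μ.prod (volume : Measure ℝ), DifferentiableAt ℝ (F z.1) z.2 := by
  rw [ae_iff]
  refine Measure.measure_prod_null_of_ae_null
    (measurableSet_differentiableAt_of_monotone hF hmono).compl (.of_forall fun a => ?_)
  exact ae_iff.1 (hmono a).ae_differentiableAt

end MeasurableFamily

section ProductMeasure

variable {α β γ : Type*} [MeasurableSpace α] [MeasurableSpace β] [MeasurableSpace γ]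

theorem setLIntegral_prod_eq_setLIntegral_sections {μ : Measure α} {ν : Measure β} [SFinite ν]
    {E : Set (α × β)} (hE : MeasurableSet E) {P : Set α} (hP : MeasurableSet P)
    (hEP : E ⊆ Prod.fst ⁻¹' P) {φ : α × β → ℝ≥0∞} (hφ : Measurable φ) :
    ∫⁻ z in E, φ z ∂μ.prod ν = ∫⁻ x in P, ∫⁻ y in Prod.mk x ⁻¹' E, φ (x, y) ∂ν ∂μ := by
  rw [← lintegral_indicator hE, lintegral_prod _ (hφ.indicator hE).aemeasurable,
    ← lintegral_indicator hP]
  refine lintegral_congr fun x => ?_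
  by_cases hx : x ∈ P
  · rw [indicator_of_mem hx, ← lintegral_indicator (measurable_prodMk_left hE)]
    rfl
  · have hxE (y : β) : (x, y) ∉ E := fun h => hx (hEP h)
    simp [hx, hxE]

theorem measure_prod_image_prodMk_eq_zero [StandardBorelSpace α]
    [MeasurableSpace.CountablySeparated (β × γ)] {μ : Measure β} {ν : Measure γ} [SFinite ν]
    [NullSingletonClass ν] {g : α → β} {h : α → γ} (hg : Measurable g) (hh : Measurable h)
    {P : Set α} (hP : MeasurableSet P) (hinj : InjOn g P) :
    μ.prod ν ((fun x => (g x, h x)) '' P) = 0 := by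
  have himage : MeasurableSet ((fun x => (g x, h x)) '' P) :=
    hP.image_of_measurable_injOn (hg.prodMk hh) fun x hx x' hx' heq =>
      hinj hx hx' (congrArg Prod.fst heq)
  refine Measure.measure_prod_null_of_ae_null himage (.of_forall fun u => ?_)
  refine Set.Subsingleton.measure_zero ?_ ν
  rintro v ⟨x, hx, hxv⟩ v' ⟨x', hx', hxv'⟩
  obtain ⟨hxu, rfl⟩ := Prod.ext_iff.1 hxv
  obtain ⟨hxu', rfl⟩ := Prod.ext_iff.1 hxv'
  exact congrArg h (hinj hx hx' (hxu.trans hxu'.symm))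

theorem ae_eq_of_map_withDensity_eq [StandardBorelSpace α]
    [MeasurableSpace.CountablySeparated β] {μ : Measure α} [SigmaFinite μ] {ν : Measure β}
    {ρ J : α → ℝ≥0∞} (hρ : Measurable ρ) (hJ : Measurable J) {σ : β → ℝ≥0∞} {f : α → β}
    (hf : Measurable f) (hpush : (μ.withDensity ρ).map f = ν.withDensity σ)
    {G : Set α} (hG : MeasurableSet G) (hGae : ∀ᵐ z ∂μ.withDensity ρ, z ∈ G) (hinj : InjOn f G)
    (hchange : ∀ E ⊆ G, MeasurableSet E → ∫⁻ w in f '' E, σ w ∂ν = ∫⁻ z in E, J z ∂μ) :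
    ρ =ᵐ[μ.withDensity ρ] J := by
  have hset {E : Set α} (hEG : E ⊆ G) (hE : MeasurableSet E) :
      ∫⁻ z in E, ρ z ∂μ = ∫⁻ z in E, J z ∂μ := by
    have hfE : MeasurableSet (f '' E) := hE.image_of_measurable_injOn hf (hinj.mono hEG)
    have hpre : E =ᵐ[μ.withDensity ρ] f ⁻¹' (f '' E) := by
      filter_upwards [hGae] with z hz
      exact propext (hinj.mem_image_iff hEG hz).symm
    rw [← withDensity_apply _ hE, measure_congr hpre, ← Measure.map_apply hf hfE, hpush,
      withDensity_apply _ hfE, hchange E hEG hE]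
  have hrestrict : ρ =ᵐ[μ.restrict G] J :=
    ae_eq_of_forall_setLIntegral_eq_of_sigmaFinite hρ hJ fun s hs _ => by
      rw [Measure.restrict_restrict hs]
      exact hset inter_subset_right (hs.inter hG)
  filter_upwards [hGae, (withDensity_absolutelyContinuous μ ρ).ae_le
    ((ae_restrict_iff' hG).1 hrestrict)] with z hzG hz using hz hzG

end ProductMeasure

theorem det_fderiv_eq_deriv {𝕜 : Type*} [NontriviallyNormedField 𝕜] (h : 𝕜 → 𝕜) (x : 𝕜) :
    (fderiv 𝕜 h x).det = deriv h x := by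
  rw [← toSpanSingleton_deriv, ContinuousLinearMap.det_toSpanSingleton]

theorem ae_det_fderiv_ne_zero_of_map_absolutelyContinuous {E : Type*} [NormedAddCommGroup E]
    [NormedSpace ℝ E] [FiniteDimensional ℝ E] [MeasurableSpace E] [BorelSpace E]
    {ν : Measure E} [ν.IsAddHaarMeasure] {μ : Measure E} {g : E → E} (hg : AEMeasurable g μ)
    (hac : μ.map g ≪ ν) :
    ∀ᵐ x ∂μ, DifferentiableAt ℝ g x → (fderiv ℝ g x).det ≠ 0 := by
  have hnull : ν (g '' {x | DifferentiableAt ℝ g x ∧ (fderiv ℝ g x).det = 0}) = 0 :=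
    addHaar_image_eq_zero_of_det_fderivWithin_eq_zero ν
      (fun x hx => hx.1.hasFDerivAt.hasFDerivWithinAt) fun x hx => hx.2
  filter_upwards [ae_of_ae_map hg (hac.ae_le (measure_eq_zero_iff_ae_notMem.1 hnull))]
    with x hx hdiff hdet using hx (mem_image_of_mem g ⟨hdiff, hdet⟩)

section TriangularMap

variable {α β γ δ : Type*}

/-- The triangular (Knothe–Rosenblatt type) map `(x, y) ↦ (g x, F x y)`; the second component is
curried so that its sections are the functions `F x`. -/
def triangularMap (g : α → γ) (F : α → β → δ) (z : α × β) : γ × δ :=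
  (g z.1, F z.1 z.2)

theorem measurable_triangularMap [MeasurableSpace α] [MeasurableSpace β] [MeasurableSpace γ]
    [MeasurableSpace δ] {g : α → γ} {F : α → β → δ} (hg : Measurable g)
    (hF : Measurable (uncurry F)) : Measurable (triangularMap g F) :=
  (hg.comp measurable_fst).prodMk hF

theorem prodMk_preimage_image_triangularMap {g : α → γ} {F : α → β → δ} {P : Set α}
    (hg : InjOn g P) {E : Set (α × β)} (hEP : E ⊆ Prod.fst ⁻¹' P) {x : α} (hx : x ∈ P) :
    Prod.mk (g x) ⁻¹' (triangularMap g F '' E) = F x '' (Prod.mk x ⁻¹' E) := by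
  ext v
  constructor
  · rintro ⟨⟨x', y⟩, hz, heq⟩
    obtain ⟨hxx', hv⟩ := Prod.ext_iff.1 heq
    obtain rfl : x' = x := hg (hEP hz) hx hxx'
    exact ⟨y, hz, hv⟩
  · rintro ⟨y, hy, rfl⟩
    exact ⟨(x, y), hy, rfl⟩

theorem injOn_triangularMap {g : α → γ} {F : α → β → δ} {E : Set (α × β)}
    (hg : InjOn g (Prod.fst '' E)) (hF : ∀ x, InjOn (F x) (Prod.mk x ⁻¹' E)) :
    InjOn (triangularMap g F) E := by
  rintro ⟨x, y⟩ hz ⟨x', y'⟩ hz' heq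
  obtain ⟨hx, hy⟩ := Prod.ext_iff.1 heq
  obtain rfl : x = x' := hg (mem_image_of_mem _ hz) (mem_image_of_mem _ hz') hx
  exact congrArg (Prod.mk x) (hF x hz hz' hy)

end TriangularMap

section ChangeOfVariables

variable {V W : Type*} [NormedAddCommGroup V] [NormedSpace ℝ V] [FiniteDimensional ℝ V]
  [MeasurableSpace V] [BorelSpace V] [NormedAddCommGroup W] [NormedSpace ℝ W]
  [FiniteDimensional ℝ W] [MeasurableSpace W] [BorelSpace W]

theorem lintegral_image_triangularMap {μ : Measure V} [μ.IsAddHaarMeasure] {ν : Measure W}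
    [ν.IsAddHaarMeasure] {g : V → V} (hgmeas : Measurable g) {F : V → W → W}
    (hFmeas : Measurable (uncurry F))
    (hdet : Measurable fun z : V × W => (fderiv ℝ (F z.1) z.2).det)
    {P : Set V} (hP : MeasurableSet P) (hginj : InjOn g P)
    (hgdiff : ∀ x ∈ P, DifferentiableAt ℝ g x)
    {E : Set (V × W)} (hE : MeasurableSet E) (hEP : E ⊆ Prod.fst ⁻¹' P)
    (hFinj : ∀ x, InjOn (F x) (Prod.mk x ⁻¹' E))
    (hFdiff : ∀ z ∈ E, DifferentiableAt ℝ (F z.1) z.2)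
    {φ : V × W → ℝ≥0∞} (hφ : Measurable φ) :
    ∫⁻ w in triangularMap g F '' E, φ w ∂μ.prod ν =
      ∫⁻ z in E, ENNReal.ofReal |(fderiv ℝ g z.1).det| *
        (ENNReal.ofReal |(fderiv ℝ (F z.1) z.2).det| * φ (triangularMap g F z)) ∂μ.prod ν := by
  have := FiniteDimensional.proper ℝ V
  have := FiniteDimensional.proper ℝ W
  set T := triangularMap g F
  have hT : Measurable T := measurable_triangularMap hgmeas hFmeas
  have hTinj : InjOn T E := injOn_triangularMap (hginj.mono (image_subset_iff.2 hEP)) hFinj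
  have hTE : MeasurableSet (T '' E) := hE.image_of_measurable_injOn hT hTinj
  have hTEP : T '' E ⊆ Prod.fst ⁻¹' (g '' P) := by
    rintro _ ⟨z, hz, rfl⟩
    exact mem_image_of_mem g (hEP hz)
  have hgdet : Measurable fun x => (fderiv ℝ g x).det :=
    ContinuousLinearMap.continuous_det.measurable.comp (measurable_fderiv ℝ g)
  have hweight : Measurable fun z : V × W =>
      ENNReal.ofReal |(fderiv ℝ (F z.1) z.2).det| * φ (T z) :=
    hdet.abs.ennreal_ofReal.mul (hφ.comp hT)
  have hjac : Measurable fun z : V × W => ENNReal.ofReal |(fderiv ℝ g z.1).det| *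
      (ENNReal.ofReal |(fderiv ℝ (F z.1) z.2).det| * φ (T z)) :=
    (hgdet.comp measurable_fst).abs.ennreal_ofReal.mul hweight
  have hfiber (x : V) (hx : x ∈ P) :
      ∫⁻ v in Prod.mk (g x) ⁻¹' (T '' E), φ (g x, v) ∂ν =
        ∫⁻ y in Prod.mk x ⁻¹' E,
          ENNReal.ofReal |(fderiv ℝ (F x) y).det| * φ (T (x, y)) ∂ν := by
    rw [prodMk_preimage_image_triangularMap hginj hEP hx]
    exact lintegral_image_eq_lintegral_abs_det_fderiv_mul ν (measurable_prodMk_left hE)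
      (fun y hy => (hFdiff (x, y) hy).hasFDerivAt.hasFDerivWithinAt) (hFinj x) _
  rw [setLIntegral_prod_eq_setLIntegral_sections hTE
      (hP.image_of_measurable_injOn hgmeas hginj) hTEP hφ,
    setLIntegral_prod_eq_setLIntegral_sections hE hP hEP hjac,
    lintegral_image_eq_lintegral_abs_det_fderiv_mul μ hP
      (fun x hx => (hgdiff x hx).hasFDerivAt.hasFDerivWithinAt) hginj]
  refine setLIntegral_congr_fun hP fun x hx => ?_
  simp only [hfiber x hx]
  exact (lintegral_const_mul _ (hweight.comp measurable_prodMk_left)).symm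

end ChangeOfVariables

section MonotoneTriangularMap

variable {g : ℝ → ℝ} {F : ℝ → ℝ → ℝ}

/-- The points at which the Jacobian of `triangularMap g F` can be computed, with the flat pieces
of the monotone sections `F x` removed. -/
def regularSet (g : ℝ → ℝ) (F : ℝ → ℝ → ℝ) : Set (ℝ × ℝ) :=
  {z | deriv g z.1 ≠ 0 ∧ DifferentiableAt ℝ (F z.1) z.2 ∧ ∀ q : ℚ, F z.1 z.2 ≠ F z.1 q}

theorem measurableSet_regularSet (hF : Measurable (uncurry F)) (hmono : ∀ x, Monotone (F x)) :
    MeasurableSet (regularSet g F) := by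
  have hderiv : MeasurableSet {z : ℝ × ℝ | deriv g z.1 ≠ 0} :=
    ((measurable_deriv g).comp measurable_fst) (measurableSet_singleton 0).compl
  have hflat (q : ℚ) : MeasurableSet {z : ℝ × ℝ | F z.1 z.2 ≠ F z.1 q} :=
    (measurableSet_eq_fun hF (hF.comp (measurable_fst.prodMk measurable_const))).compl
  have hsplit : regularSet g F = {z : ℝ × ℝ | deriv g z.1 ≠ 0} ∩
      ({z | DifferentiableAt ℝ (F z.1) z.2} ∩ ⋂ q : ℚ, {z | F z.1 z.2 ≠ F z.1 q}) := by
    ext z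
    simp [regularSet]
  rw [hsplit]
  exact hderiv.inter ((measurableSet_differentiableAt_of_monotone hF hmono).inter (.iInter hflat))

theorem injOn_sections_regularSet (hmono : ∀ x, Monotone (F x)) (x : ℝ) :
    InjOn (F x) (Prod.mk x ⁻¹' regularSet g F) :=
  (injOn_forall_mem_dense_ne_of_monotone Rat.denseRange_cast (hmono x)).mono
    fun _ hy => by rintro _ ⟨q, rfl⟩; exact hy.2.2 q

theorem injOn_triangularMap_regularSet (hg : Monotone g) (hmono : ∀ x, Monotone (F x)) :
    InjOn (triangularMap g F) (regularSet g F) :=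
  injOn_triangularMap ((injOn_deriv_ne_zero_of_monotone hg).mono
    (forall_mem_image.2 fun _ hz => hz.1)) (injOn_sections_regularSet hmono)

theorem lintegral_image_triangularMap_of_subset_regularSet (hg : Monotone g)
    (hF : Measurable (uncurry F)) (hmono : ∀ x, Monotone (F x)) {E : Set (ℝ × ℝ)}
    (hE : MeasurableSet E) (hER : E ⊆ regularSet g F) {φ : ℝ × ℝ → ℝ≥0∞} (hφ : Measurable φ) :
    ∫⁻ w in triangularMap g F '' E, φ w =
      ∫⁻ z in E, ENNReal.ofReal |deriv g z.1| *
        (ENNReal.ofReal |deriv (F z.1) z.2| * φ (triangularMap g F z)) := by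
  rw [Measure.volume_eq_prod]
  simpa only [det_fderiv_eq_deriv] using
    lintegral_image_triangularMap (μ := volume) (ν := volume) hg.measurable hF
      (by simpa only [det_fderiv_eq_deriv] using measurable_deriv_of_monotone hF hmono)
      (measurable_deriv g (measurableSet_singleton 0).compl) (injOn_deriv_ne_zero_of_monotone hg)
      (fun x hx => differentiableAt_of_deriv_ne_zero hx) hE (fun z hz => (hER hz).1)
      (fun x => (injOn_sections_regularSet hmono x).mono fun _ hy => hER hy)
      (fun z hz => (hER hz).2.1) hφ

theorem ae_deriv_ne_zero_of_map_triangularMap_absolutelyContinuous (hg : Monotone g)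
    (hF : Measurable (uncurry F)) {μ : Measure (ℝ × ℝ)} (hμ : μ ≪ volume)
    (hpush : μ.map (triangularMap g F) ≪ volume) :
    ∀ᵐ z ∂μ, deriv g z.1 ≠ 0 := by
  have hmarginal : (μ.map Prod.fst).map g ≪ volume := by
    have hcomm : (μ.map Prod.fst).map g = (μ.map (triangularMap g F)).map Prod.fst := by
      rw [Measure.map_map hg.measurable measurable_fst,
        Measure.map_map measurable_fst (measurable_triangularMap hg.measurable hF)]
      rfl
    exact hcomm ▸ (hpush.map measurable_fst).trans
      Measure.quasiMeasurePreserving_fst.absolutelyContinuous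
  have hdet := ae_of_ae_map measurable_fst.aemeasurable
    (ae_det_fderiv_ne_zero_of_map_absolutelyContinuous hg.measurable.aemeasurable hmarginal)
  have hdiff : ∀ᵐ z ∂μ, DifferentiableAt ℝ g z.1 :=
    hμ.ae_le (Measure.quasiMeasurePreserving_fst.ae hg.ae_differentiableAt)
  filter_upwards [hdet, hdiff] with z hzdet hzdiff
  exact det_fderiv_eq_deriv g z.1 ▸ hzdet hzdiff

theorem ae_forall_ne_rat_of_map_triangularMap_absolutelyContinuous (hg : Monotone g)
    (hF : Measurable (uncurry F)) {μ : Measure (ℝ × ℝ)}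
    (hpush : μ.map (triangularMap g F) ≪ volume) :
    ∀ᵐ z ∂μ, deriv g z.1 ≠ 0 → ∀ q : ℚ, F z.1 z.2 ≠ F z.1 q := by
  have hgraph (q : ℚ) : volume ((fun x => (g x, F x q)) '' {x | deriv g x ≠ 0}) = 0 :=
    measure_prod_image_prodMk_eq_zero hg.measurable
      (hF.comp (measurable_id.prodMk measurable_const))
      (measurable_deriv g (measurableSet_singleton 0).compl) (injOn_deriv_ne_zero_of_monotone hg)
  filter_upwards [ae_of_ae_map (measurable_triangularMap hg.measurable hF).aemeasurable
    (hpush.ae_le (ae_all_iff.2 fun q => measure_eq_zero_iff_ae_notMem.1 (hgraph q)))]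
    with z hz hderiv q heq
  exact hz q ⟨z.1, hderiv, Prod.ext rfl heq.symm⟩

theorem ae_mem_regularSet (hg : Monotone g) (hF : Measurable (uncurry F))
    (hmono : ∀ x, Monotone (F x)) {μ : Measure (ℝ × ℝ)} (hμ : μ ≪ volume)
    (hpush : μ.map (triangularMap g F) ≪ volume) :
    ∀ᵐ z ∂μ, z ∈ regularSet g F := by
  filter_upwards [ae_deriv_ne_zero_of_map_triangularMap_absolutelyContinuous hg hF hμ hpush,
    hμ.ae_le (ae_differentiableAt_of_forall_monotone hF hmono),
    ae_forall_ne_rat_of_map_triangularMap_absolutelyContinuous hg hF hpush]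
    with z hderiv hdiff hflat
  exact ⟨hderiv, hdiff, hflat hderiv⟩

theorem density_ae_eq_jacobian_mul_of_forall_monotone {ρ σ : ℝ × ℝ → ℝ≥0∞} (hρ : Measurable ρ)
    (hσ : Measurable σ) (hg : Monotone g) (hF : Measurable (uncurry F))
    (hmono : ∀ x, Monotone (F x))
    (hpush : (volume.withDensity ρ).map (triangularMap g F) = volume.withDensity σ) :
    ∀ᵐ z ∂volume.withDensity ρ, ρ z = ENNReal.ofReal |deriv g z.1| *
      (ENNReal.ofReal |deriv (F z.1) z.2| * σ (triangularMap g F z)) := by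
  have hT : Measurable (triangularMap g F) := measurable_triangularMap hg.measurable hF
  have hjac : Measurable fun z : ℝ × ℝ => ENNReal.ofReal |deriv g z.1| *
      (ENNReal.ofReal |deriv (F z.1) z.2| * σ (triangularMap g F z)) :=
    ((measurable_deriv g).comp measurable_fst).abs.ennreal_ofReal.mul
      ((measurable_deriv_of_monotone hF hmono).abs.ennreal_ofReal.mul (hσ.comp hT))
  exact ae_eq_of_map_withDensity_eq hρ hjac hT hpush (measurableSet_regularSet hF hmono)
    (ae_mem_regularSet hg hF hmono (withDensity_absolutelyContinuous _ _)
      (hpush ▸ withDensity_absolutelyContinuous _ _))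
    (injOn_triangularMap_regularSet hg hmono)
    fun E hER hE => lintegral_image_triangularMap_of_subset_regularSet hg hF hmono hE hER hσ

theorem density_ae_eq_jacobian_mul_of_ae_monotone {ρ σ : ℝ × ℝ → ℝ≥0∞} (hρ : Measurable ρ)
    (hσ : Measurable σ) (hg : Monotone g) (hF : Measurable (uncurry F))
    (hmono : ∀ᵐ x, Monotone (F x))
    (hpush : (volume.withDensity ρ).map (triangularMap g F) = volume.withDensity σ) :
    ∀ᵐ z ∂volume.withDensity ρ, ρ z = ENNReal.ofReal |deriv g z.1| *
      (ENNReal.ofReal |deriv (F z.1) z.2| * σ (triangularMap g F z)) := by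
  obtain ⟨N, hN, hNmeas, hNnull⟩ := exists_measurable_superset_of_null (ae_iff.1 hmono)
  set F' : ℝ → ℝ → ℝ := Nᶜ.indicator F
  have hF' : Measurable (uncurry F') := by
    have : uncurry F' = (Prod.fst ⁻¹' Nᶜ).indicator (uncurry F) := by
      ext z
      by_cases hz : z.1 ∈ N <;> simp [F', uncurry, hz]
    rw [this]
    exact hF.indicator (measurable_fst hNmeas.compl)
  have hmono' (x : ℝ) : Monotone (F' x) := by
    by_cases hx : x ∈ N
    · simp only [F', indicator_of_notMem (notMem_compl_iff.2 hx)]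
      exact monotone_const
    · simp only [F', indicator_of_mem (mem_compl hx)]
      exact not_not.1 fun h => hx (hN h)
  have hsections : ∀ᵐ z ∂volume.withDensity ρ, F' z.1 = F z.1 := by
    refine (withDensity_absolutelyContinuous _ _).ae_le
      (Measure.quasiMeasurePreserving_fst.ae (p := fun x => F' x = F x) ?_)
    filter_upwards [measure_eq_zero_iff_ae_notMem.1 hNnull] with x hx
    exact indicator_of_mem (mem_compl hx) F
  have hpush' : (volume.withDensity ρ).map (triangularMap g F') = volume.withDensity σ := by
    rw [← hpush]
    refine Measure.map_congr ?_
    filter_upwards [hsections] with z hz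
    simp only [triangularMap, hz]
  filter_upwards [density_ae_eq_jacobian_mul_of_forall_monotone hρ hσ hg hF' hmono' hpush',
    hsections] with z hjac hz
  simpa only [triangularMap, hz] using hjac

end MonotoneTriangularMap

theorem jacobian_equation_general
    {ρ0 ρ1 : ℝ × ℝ → ℝ} (hρ0meas : Measurable ρ0) (hρ1meas : Measurable ρ1)
    (hρ0nn : ∀ z, 0 ≤ ρ0 z) (hρ1nn : ∀ z, 0 ≤ ρ1 z)
    {μ0 μ1 : Measure (ℝ × ℝ)}
    (hμ0 : μ0 = volume.withDensity (fun z => ENNReal.ofReal (ρ0 z)))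
    (hμ1 : μ1 = volume.withDensity (fun z => ENNReal.ofReal (ρ1 z)))
    {f : ℝ × ℝ → ℝ × ℝ} (hfmeas : Measurable f) (hpush : μ0.map f = μ1)
    {g : ℝ → ℝ} (hg : Monotone g) (hf1 : ∀ x y : ℝ, (f (x, y)).1 = g x)
    (hf2 : ∀ᵐ x : ℝ ∂volume, Monotone fun y => (f (x, y)).2) :
    ∀ᵐ z ∂μ0,
      ρ1 (f z) * deriv g z.1 * deriv (fun y => (f (z.1, y)).2) z.2 = ρ0 z := by
  have hac : μ0 ≪ volume := hμ0 ▸ withDensity_absolutelyContinuous _ _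
  subst hμ0 hμ1
  set F : ℝ → ℝ → ℝ := fun x y => (f (x, y)).2
  have hf : f = triangularMap g F := funext fun z => Prod.ext (hf1 z.1 z.2) rfl
  filter_upwards [density_ae_eq_jacobian_mul_of_ae_monotone hρ0meas.ennreal_ofReal
    hρ1meas.ennreal_ofReal hg (F := F) hfmeas.snd hf2 (hf ▸ hpush),
    hac.ae_le (Measure.quasiMeasurePreserving_fst.ae hf2)] with z hjac hmono
  have hg' : 0 ≤ deriv g z.1 := hg.deriv_nonneg
  have hF' : 0 ≤ deriv (F z.1) z.2 := hmono.deriv_nonneg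
  rw [← hf, abs_of_nonneg hg', abs_of_nonneg hF', ← ENNReal.ofReal_mul hF',
    ← ENNReal.ofReal_mul hg', ENNReal.ofReal_eq_ofReal_iff (hρ0nn z)
      (mul_nonneg hg' (mul_nonneg hF' (hρ1nn _)))] at hjac
  rw [hjac]
  ring

end

/-- Proposition 2.1: Jacobian equation for an essentially injective transport map whose first
component depends only on x and is nondecreasing, and whose second component is nondecreasing
in y for a.e. x. -/
theorem jacobian_equation
    (ρ0 ρ1 : ℝ × ℝ → ℝ) (hρ0meas : Measurable ρ0) (hρ1meas : Measurable ρ1)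
    (hρ0nn : ∀ z, 0 ≤ ρ0 z) (hρ1nn : ∀ z, 0 ≤ ρ1 z)
    (μ0 μ1 : Measure (ℝ × ℝ))
    (hμ0 : μ0 = volume.withDensity (fun z => ENNReal.ofReal (ρ0 z)))
    (hμ1 : μ1 = volume.withDensity (fun z => ENNReal.ofReal (ρ1 z)))
    (hp0 : IsProbabilityMeasure μ0) (hp1 : IsProbabilityMeasure μ1)
    (hm0 : FiniteSecondMoment μ0) (hm1 : FiniteSecondMoment μ1)
    (f : ℝ × ℝ → ℝ × ℝ) (hfmeas : Measurable f)
    (hpush : μ0.map f = μ1)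
    (hinj : ∃ Z : Set (ℝ × ℝ), volume Z = 0 ∧ Set.InjOn f Zᶜ)
    (g : ℝ → ℝ) (hg : Monotone g)
    (hf1 : ∀ x y : ℝ, (f (x, y)).1 = g x)
    (hf2 : ∀ᵐ x : ℝ ∂volume, Monotone fun y => (f (x, y)).2) :
    ∀ᵐ z ∂μ0,
      ρ1 (f z) * deriv g z.1 * deriv (fun y => (f (z.1, y)).2) z.2 = ρ0 z :=
  jacobian_equation_general hρ0meas hρ1meas hρ0nn hρ1nn hμ0 hμ1 hfmeas hpush hg hf1 hf2

end
end

section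
/- Fix x_c, y_c ∈ ℝ and set S(x) = y_c + √(1 − (x − x_c)²). Let a < b and c ∈ ℝ and E = {(x,y) ∈ ℝ² : a ≤ x ≤ b, S(x) ≤ y ≤ c}, and assume |x − x_c| < (1/2)(y − y_c) for all (x,y) ∈ E (with E nonempty above every x ∈ [a,b]). Then for all x1, x2 ∈ [a,b]: S((x1 + x2)/2) − (S(x1) + S(x2))/2 ≤ |x1 − x2|²/2. -/
open MeasureTheory ENNReal
open scoped Classical

noncomputable section

/-- The unit circle arc (centered at (x_c, y_c)) bounding the domain E from below. -/
def Sc (xc yc x : ℝ) : ℝ := yc + Real.sqrt (1 - (x - xc) ^ 2)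

/-!
Let `p` and `q` be the heights of a hemisphere of radius `R` above `u` and `v`, and `s` its height
above their midpoint. The parallelogram law gives
`(2 * s - (p + q)) * (2 * s + (p + q)) = (p - q) ^ 2 + ‖u - v‖ ^ 2`.
If `p` and `q` are at least `δ`, so is `s`, and the second factor is at least `4 * δ`; since
`p ^ 2 - q ^ 2 = ‖v‖ ^ 2 - ‖u‖ ^ 2`, the height is Lipschitz with constant `√(R ^ 2 - δ ^ 2) / δ`,
so the right-hand side is at most `(R / δ) ^ 2 * ‖u - v‖ ^ 2`. A bound `K` on the slope at `u` and
`v` allows `δ = R / √(1 + K ^ 2)`.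
-/

section Seminormed

variable {V : Type*} [SeminormedAddCommGroup V] {R δ K : ℝ} {u v : V}

/-- The upper half of the sphere of radius `R` centered at `(xc, yc)` in `V × ℝ`, as a graph over
`V`; `Sc` is the case `R = 1`, `V = ℝ`. Outside the ball of radius `R` around `xc` the square root
is `0`, so the value is `yc`. -/
def upperHemisphere (R : ℝ) (xc : V) (yc : ℝ) (x : V) : ℝ := yc + √(R ^ 2 - ‖x - xc‖ ^ 2)

lemma sq_sqrt_sub_sqrt_mul_sq_le (hδ : 0 ≤ δ) (hu : ‖u‖ ^ 2 + δ ^ 2 ≤ R ^ 2)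
    (hv : ‖v‖ ^ 2 + δ ^ 2 ≤ R ^ 2) :
    (√(R ^ 2 - ‖u‖ ^ 2) - √(R ^ 2 - ‖v‖ ^ 2)) ^ 2 * δ ^ 2 ≤ (R ^ 2 - δ ^ 2) * ‖u - v‖ ^ 2 := by
  have hp : δ ≤ √(R ^ 2 - ‖u‖ ^ 2) := Real.le_sqrt_of_sq_le (by linarith)
  have hq : δ ≤ √(R ^ 2 - ‖v‖ ^ 2) := Real.le_sqrt_of_sq_le (by linarith)
  have hp_sq : √(R ^ 2 - ‖u‖ ^ 2) ^ 2 = R ^ 2 - ‖u‖ ^ 2 :=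
    Real.sq_sqrt (by linarith [sq_nonneg δ])
  have hq_sq : √(R ^ 2 - ‖v‖ ^ 2) ^ 2 = R ^ 2 - ‖v‖ ^ 2 :=
    Real.sq_sqrt (by linarith [sq_nonneg δ])
  set p := √(R ^ 2 - ‖u‖ ^ 2)
  set q := √(R ^ 2 - ‖v‖ ^ 2)
  have norm_diff : (‖u‖ - ‖v‖) ^ 2 ≤ ‖u - v‖ ^ 2 :=
    sq_le_sq.2 ((abs_norm_sub_norm_le u v).trans (le_abs_self _))
  have norm_sum : (‖u‖ + ‖v‖) ^ 2 ≤ 4 * (R ^ 2 - δ ^ 2) := by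
    linarith [add_sq_le (a := ‖u‖) (b := ‖v‖)]
  have diff_of_squares : (p - q) * (p + q) = -((‖u‖ - ‖v‖) * (‖u‖ + ‖v‖)) := by
    linear_combination hp_sq - hq_sq
  have : (p - q) ^ 2 * (4 * δ ^ 2) ≤ 4 * (R ^ 2 - δ ^ 2) * ‖u - v‖ ^ 2 :=
    calc (p - q) ^ 2 * (4 * δ ^ 2) = (p - q) ^ 2 * (δ + δ) ^ 2 := by ring
      _ ≤ (p - q) ^ 2 * (p + q) ^ 2 := by gcongr
      _ = (‖u‖ + ‖v‖) ^ 2 * (‖u‖ - ‖v‖) ^ 2 := by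
        rw [← mul_pow, diff_of_squares, neg_sq, mul_pow, mul_comm]
      _ ≤ 4 * (R ^ 2 - δ ^ 2) * ‖u - v‖ ^ 2 := by gcongr; exact (sq_nonneg _).trans norm_sum
  linarith

lemma norm_sq_add_sq_div_sqrt_le_of_norm_le_mul_sqrt (hR : 0 < R)
    (hu : ‖u‖ ≤ K * √(R ^ 2 - ‖u‖ ^ 2)) :
    ‖u‖ ^ 2 + (R / √(1 + K ^ 2)) ^ 2 ≤ R ^ 2 := by
  have radicand_nonneg : 0 ≤ R ^ 2 - ‖u‖ ^ 2 := by
    by_contra! hneg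
    rw [Real.sqrt_eq_zero_of_nonpos hneg.le, mul_zero] at hu
    have : ‖u‖ = 0 := hu.antisymm (norm_nonneg u)
    rw [this] at hneg
    linarith [pow_pos hR 2]
  have hsq : ‖u‖ ^ 2 ≤ K ^ 2 * (R ^ 2 - ‖u‖ ^ 2) := by
    simpa only [mul_pow, Real.sq_sqrt radicand_nonneg] using pow_le_pow_left₀ (norm_nonneg u) hu 2
  have : R ^ 2 / (1 + K ^ 2) ≤ R ^ 2 - ‖u‖ ^ 2 := by
    rw [div_le_iff₀ (by positivity)]
    linarith
  rw [div_pow, Real.sq_sqrt (by positivity)]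
  linarith

end Seminormed

section InnerProduct

variable {V : Type*} [SeminormedAddCommGroup V] [InnerProductSpace ℝ V] {R δ K : ℝ}
  {u v xc x₁ x₂ : V}

lemma four_mul_norm_midpoint_sq_add_norm_sub_sq (u v : V) :
    4 * ‖midpoint ℝ u v‖ ^ 2 + ‖u - v‖ ^ 2 = 2 * (‖u‖ ^ 2 + ‖v‖ ^ 2) := by
  have h : ‖midpoint ℝ u v‖ = ‖u + v‖ / 2 := by
    rw [midpoint_eq_smul_add, norm_smul, invOf_eq_inv, norm_inv, Real.norm_ofNat,
      inv_mul_eq_div]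
  rw [h]
  linear_combination parallelogram_law_with_norm ℝ u v

lemma sqrt_sub_norm_midpoint_sq_sub_average_le (hδ : 0 < δ) (hu : ‖u‖ ^ 2 + δ ^ 2 ≤ R ^ 2)
    (hv : ‖v‖ ^ 2 + δ ^ 2 ≤ R ^ 2) :
    √(R ^ 2 - ‖midpoint ℝ u v‖ ^ 2) - (√(R ^ 2 - ‖u‖ ^ 2) + √(R ^ 2 - ‖v‖ ^ 2)) / 2 ≤
      R ^ 2 * ‖u - v‖ ^ 2 / (8 * δ ^ 3) := by
  have parallelogram := four_mul_norm_midpoint_sq_add_norm_sub_sq u v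
  have hm : ‖midpoint ℝ u v‖ ^ 2 + δ ^ 2 ≤ R ^ 2 := by linarith [sq_nonneg ‖u - v‖]
  have height_ge {w : V} (hw : ‖w‖ ^ 2 + δ ^ 2 ≤ R ^ 2) : δ ≤ √(R ^ 2 - ‖w‖ ^ 2) :=
    Real.le_sqrt_of_sq_le (by linarith)
  have height_sq {w : V} (hw : ‖w‖ ^ 2 + δ ^ 2 ≤ R ^ 2) :
      √(R ^ 2 - ‖w‖ ^ 2) ^ 2 = R ^ 2 - ‖w‖ ^ 2 := Real.sq_sqrt (by linarith [sq_nonneg δ])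
  have lipschitz := sq_sqrt_sub_sqrt_mul_sq_le hδ.le hu hv
  have hs := height_ge hm
  have hp := height_ge hu
  have hq := height_ge hv
  have hs_sq := height_sq hm
  have hp_sq := height_sq hu
  have hq_sq := height_sq hv
  set s := √(R ^ 2 - ‖midpoint ℝ u v‖ ^ 2)
  set p := √(R ^ 2 - ‖u‖ ^ 2)
  set q := √(R ^ 2 - ‖v‖ ^ 2)
  have factored : (2 * s - (p + q)) * (2 * s + (p + q)) = (p - q) ^ 2 + ‖u - v‖ ^ 2 := by
    linear_combination 4 * hs_sq - 2 * hp_sq - 2 * hq_sq - parallelogram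
  have defect_nonneg : 0 ≤ 2 * s - (p + q) :=
    by
    refine nonneg_of_mul_nonneg_left (b := 2 * s + (p + q)) ?_ (by linarith)
    rw [factored]
    positivity
  have : (2 * s - (p + q)) * (4 * δ) * δ ^ 2 ≤ R ^ 2 * ‖u - v‖ ^ 2 :=
    calc (2 * s - (p + q)) * (4 * δ) * δ ^ 2
        ≤ (2 * s - (p + q)) * (2 * s + (p + q)) * δ ^ 2 := by gcongr; linarith
      _ = (p - q) ^ 2 * δ ^ 2 + ‖u - v‖ ^ 2 * δ ^ 2 := by rw [factored, add_mul]
      _ ≤ R ^ 2 * ‖u - v‖ ^ 2 := by linarith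
  rw [le_div_iff₀ (by positivity)]
  linarith

-- `√(1 + K ^ 2) ^ 3 / R` is, up to sign, the second derivative of an arc of radius `R` where its
-- slope is `K`.
theorem arc_midpoint_estimate_general {yc : ℝ} (hR : 0 < R)
    (h₁ : ‖x₁ - xc‖ ≤ K * (upperHemisphere R xc yc x₁ - yc))
    (h₂ : ‖x₂ - xc‖ ≤ K * (upperHemisphere R xc yc x₂ - yc)) :
    upperHemisphere R xc yc (midpoint ℝ x₁ x₂) -
        (upperHemisphere R xc yc x₁ + upperHemisphere R xc yc x₂) / 2 ≤
      √(1 + K ^ 2) ^ 3 / R * ‖x₁ - x₂‖ ^ 2 / 8 := by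
  simp only [upperHemisphere, add_sub_cancel_left] at h₁ h₂ ⊢
  have centered := sqrt_sub_norm_midpoint_sq_sub_average_le (δ := R / √(1 + K ^ 2))
    (by positivity) (norm_sq_add_sq_div_sqrt_le_of_norm_le_mul_sqrt hR h₁)
    (norm_sq_add_sq_div_sqrt_le_of_norm_le_mul_sqrt hR h₂)
  have midpoint_sub : midpoint ℝ (x₁ - xc) (x₂ - xc) = midpoint ℝ x₁ x₂ - xc := by
    simpa only [vsub_eq_sub, midpoint_self] using (midpoint_vsub_midpoint x₁ x₂ xc xc).symm
  rw [midpoint_sub, sub_sub_sub_cancel_right] at centered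
  calc _ = √(R ^ 2 - ‖midpoint ℝ x₁ x₂ - xc‖ ^ 2) -
          (√(R ^ 2 - ‖x₁ - xc‖ ^ 2) + √(R ^ 2 - ‖x₂ - xc‖ ^ 2)) / 2 := by ring
    _ ≤ R ^ 2 * ‖x₁ - x₂‖ ^ 2 / (8 * (R / √(1 + K ^ 2)) ^ 3) := centered
    _ = √(1 + K ^ 2) ^ 3 / R * ‖x₁ - x₂‖ ^ 2 / 8 := by field_simp

end InnerProduct

lemma Sc_eq_upperHemisphere (xc yc : ℝ) : Sc xc yc = upperHemisphere 1 xc yc := by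
  ext x
  rw [Sc, upperHemisphere, Real.norm_eq_abs, sq_abs, one_pow]

lemma sqrt_one_add_half_sq_pow_three_le_four : √(1 + (1 / 2) ^ 2) ^ 3 ≤ 4 :=
  calc √(1 + (1 / 2) ^ 2) ^ 3 ≤ (3 / 2) ^ 3 := by
        gcongr
        exact Real.sqrt_le_iff.2 (by norm_num)
    _ ≤ 4 := by norm_num

/-- Inequality (3.2): concavity defect estimate for the circular arc S on the base of E. -/
theorem arc_midpoint_estimate
    (xc yc a b c : ℝ) (hab : a < b)
    (E : Set (ℝ × ℝ))
    (hE : E = {p : ℝ × ℝ | a ≤ p.1 ∧ p.1 ≤ b ∧ Sc xc yc p.1 ≤ p.2 ∧ p.2 ≤ c})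
    (hgeom : ∀ p ∈ E, |p.1 - xc| < (1/2) * (p.2 - yc))
    (hne : ∀ x ∈ Set.Icc a b, Sc xc yc x ≤ c) :
    ∀ x1 ∈ Set.Icc a b, ∀ x2 ∈ Set.Icc a b,
      Sc xc yc ((x1 + x2) / 2) - (Sc xc yc x1 + Sc xc yc x2) / 2 ≤ |x1 - x2| ^ 2 / 2 := by
  intro x1 h1 x2 h2
  have slope_le (x : ℝ) (hx : x ∈ Set.Icc a b) : |x - xc| ≤ 1 / 2 * (Sc xc yc x - yc) :=
    (hgeom (x, Sc xc yc x) (hE ▸ ⟨hx.1, hx.2, le_rfl, hne x hx⟩)).le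
  have midpoint_eq : midpoint ℝ x1 x2 = (x1 + x2) / 2 := by
    rw [midpoint_eq_smul_add, invOf_eq_inv, smul_eq_mul, inv_mul_eq_div]
  rw [Sc_eq_upperHemisphere] at slope_le ⊢
  calc _ ≤ √(1 + (1 / 2) ^ 2) ^ 3 / 1 * |x1 - x2| ^ 2 / 8 :=
        midpoint_eq ▸ arc_midpoint_estimate_general one_pos (slope_le x1 h1) (slope_le x2 h2)
    _ ≤ 4 / 1 * |x1 - x2| ^ 2 / 8 := by gcongr; exact sqrt_one_add_half_sq_pow_three_le_four
    _ = |x1 - x2| ^ 2 / 2 := by ring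

end
end

section
/- Let K ∈ ℝ and h, l > 0 with l > 2h. Let X ⊆ ℝ² be a Borel set containing the squares A0 = [0,h] × [0,h] and A1 = [l, l+h] × [0,h], and suppose L2(X ∩ ([l/2, l/2 + h] × ℝ)) < e^{K l²/8} · h². Let μ0 and μ1 be the normalized restrictions of L2 to A0 and A1 respectively. Then W2(μ0, μ1) = l, and there exists NO Borel probability measure μ supported in X such that W2(μ0, μ) = W2(μ, μ1) = l/2 and Ent_∞(μ) ≤ (1/2)·Ent_∞(μ0) + (1/2)·Ent_∞(μ1) − (K/8)·l², where Ent_∞ is taken with respect to L2 restricted to X. (Consequently (X, ‖·‖∞, L2|X) fails the CD(K,∞) condition.) -/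
open MeasureTheory ENNReal
open scoped Classical

noncomputable section

/-- The quadratic Wasserstein distance W₂ w.r.t. the sup-norm distance on ℝ². -/
def W2 (μ ν : Measure (ℝ × ℝ)) : ℝ≥0∞ :=
  (⨅ γ ∈ Couplings μ ν, costSup γ) ^ (1/2 : ℝ)

/-- The Boltzmann entropy Ent_∞(μ) = ∫ ρ log ρ dm ∈ [-∞,∞] when μ = ρ·m is absolutely
continuous w.r.t. m (the integral taken as difference of the lower integrals of the
positive and negative parts), and +∞ otherwise. -/
def EntInf (m μ : Measure (ℝ × ℝ)) : EReal :=
  if μ ≪ m then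
    ((∫⁻ z, ENNReal.ofReal ((μ.rnDeriv m z).toReal * Real.log (μ.rnDeriv m z).toReal) ∂m : ℝ≥0∞) : EReal)
      - ((∫⁻ z, ENNReal.ofReal (-((μ.rnDeriv m z).toReal * Real.log (μ.rnDeriv m z).toReal)) ∂m : ℝ≥0∞) : EReal)
  else ⊤

/-!
A `1`-Lipschitz function `f` turns `W2` into a one-dimensional transport problem: its mean moves by
at most `W2 μ ν`, and a coupling of cost `c` whose mean displacement is at least `r` displaces `f`
by `r` up to a squared `L²` error of `c - r²`. If `μ` is a metric midpoint of `μ0` and `μ1`, whose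
mean abscissas differ by `W2 μ0 μ1 = l`, then almost optimal couplings of `μ0` and `μ` displace the
abscissa by `l/2` up to an arbitrarily small `L²` error; hence `μ` lives in the vertical strip over
`[l/2, l/2 + h]`. By Gibbs' inequality its entropy is then larger than `-log (exp (K l²/8) h²)`,
while the `CD(K,∞)` bound asks for at most `-log h² - K l²/8`, which is the same number.
-/

open scoped ProbabilityTheory

section Entropy

lemma coe_integral_eq_lintegral_sub_lintegral {α : Type*} [MeasurableSpace α] {m : Measure α}
    {f : α → ℝ} (hf : Integrable f m) :
    ((∫ z, f z ∂m : ℝ) : EReal) =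
      ((∫⁻ z, ENNReal.ofReal (f z) ∂m : ℝ≥0∞) : EReal)
        - ((∫⁻ z, ENNReal.ofReal (-f z) ∂m : ℝ≥0∞) : EReal) := by
  have hneg : ∫⁻ z, ENNReal.ofReal (-f z) ∂m ≠ ∞ := hf.neg.lintegral_lt_top.ne
  rw [integral_eq_lintegral_pos_part_sub_lintegral_neg_part hf, EReal.coe_sub,
    EReal.coe_ennreal_toReal hf.lintegral_lt_top.ne, EReal.coe_ennreal_toReal hneg]

variable {m μ : Measure (ℝ × ℝ)}

lemma EntInf_eq_coe_integral (hac : μ ≪ m)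
    (hint : Integrable
      (fun z ↦ (μ.rnDeriv m z).toReal * Real.log (μ.rnDeriv m z).toReal) m) :
    EntInf m μ =
      ((∫ z, (μ.rnDeriv m z).toReal * Real.log (μ.rnDeriv m z).toReal ∂m : ℝ) : EReal) := by
  rw [EntInf, if_pos hac, coe_integral_eq_lintegral_sub_lintegral hint]

lemma coe_integral_le_EntInf (hac : μ ≪ m) {g : ℝ × ℝ → ℝ} (hg : Integrable g m)
    (hle : ∀ᵐ z ∂m, g z ≤ (μ.rnDeriv m z).toReal * Real.log (μ.rnDeriv m z).toReal) :
    ((∫ z, g z ∂m : ℝ) : EReal) ≤ EntInf m μ := by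
  rw [EntInf, if_pos hac, coe_integral_eq_lintegral_sub_lintegral hg]
  refine EReal.sub_le_sub ?_ ?_ <;> refine EReal.coe_ennreal_le_coe_ennreal_iff.2 ?_ <;>
    refine lintegral_mono_ae (hle.mono fun z hz ↦ ENNReal.ofReal_le_ofReal ?_)
  exacts [hz, neg_le_neg hz]

lemma rnDeriv_cond {α : Type*} [MeasurableSpace α] (m : Measure α) [SigmaFinite m] {A : Set α}
    (hA : MeasurableSet A) (hA0 : m A ≠ 0) :
    m[|A].rnDeriv m =ᵐ[m] A.indicator fun _ ↦ (m A)⁻¹ := by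
  filter_upwards [Measure.rnDeriv_smul_left_of_ne_top' (m.restrict A) m (ENNReal.inv_ne_top.2 hA0),
    Measure.rnDeriv_restrict_self m hA] with z hsmul hrestrict
  rw [ProbabilityTheory.cond, hsmul, Pi.smul_apply, hrestrict]
  by_cases hz : z ∈ A <;> simp [hz]

lemma EntInf_cond [SigmaFinite m] {A : Set (ℝ × ℝ)} (hA : MeasurableSet A) (hA0 : m A ≠ 0)
    (hAtop : m A ≠ ∞) : EntInf m m[|A] = ((-Real.log (m.real A) : ℝ) : EReal) := by
  have hρ : (fun z ↦ (m[|A].rnDeriv m z).toReal * Real.log (m[|A].rnDeriv m z).toReal) =ᵐ[m]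
      A.indicator fun _ ↦ (m.real A)⁻¹ * Real.log (m.real A)⁻¹ := by
    filter_upwards [rnDeriv_cond m hA hA0] with z hz
    by_cases hzA : z ∈ A <;> simp [hz, hzA, Measure.real]
  have hint : Integrable (A.indicator fun _ ↦ (m.real A)⁻¹ * Real.log (m.real A)⁻¹) m :=
    (integrable_indicator_iff hA).2 (integrableOn_const hAtop)
  have hreal : m.real A ≠ 0 := (measureReal_ne_zero_iff hAtop).2 hA0
  rw [EntInf_eq_coe_integral ProbabilityTheory.cond_absolutelyContinuous
    ((integrable_congr hρ).2 hint), integral_congr_ae hρ, integral_indicator_const _ hA,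
    smul_eq_mul, mul_inv_cancel_left₀ hreal, Real.log_inv]

lemma cond_restrict_of_subset {α : Type*} [MeasurableSpace α] (m : Measure α) {A X : Set α}
    (hA : MeasurableSet A) (hAX : A ⊆ X) : (m.restrict X)[|A] = m[|A] := by
  simp only [ProbabilityTheory.cond, Measure.restrict_apply hA, Measure.restrict_restrict hA,
    Set.inter_eq_left.2 hAX]

lemma EntInf_restrict_cond [SigmaFinite m] {A X : Set (ℝ × ℝ)} (hA : MeasurableSet A)
    (hAX : A ⊆ X) (hA0 : m A ≠ 0) (hAtop : m A ≠ ∞) :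
    EntInf (m.restrict X) m[|A] = ((-Real.log (m.real A) : ℝ) : EReal) := by
  have hrestrict : m.restrict X A = m A := by
    rw [Measure.restrict_apply hA, Set.inter_eq_left.2 hAX]
  rw [← cond_restrict_of_subset m hA hAX, EntInf_cond hA (by rwa [hrestrict]) (by rwa [hrestrict]),
    Measure.real, hrestrict, Measure.real]

lemma tangent_le_mul_log {t c : ℝ} (ht : 0 ≤ t) (hc : 0 < c) :
    (1 + Real.log c) * t - c ≤ t * Real.log t := by
  rcases ht.eq_or_lt with rfl | ht
  · simp [hc.le]
  · calc (1 + Real.log c) * t - c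
        = t * Real.log t - c * InformationTheory.klFun (t / c) := by
          rw [InformationTheory.klFun_apply, Real.log_div ht.ne' hc.ne']
          field_simp
          ring
      _ ≤ t * Real.log t := sub_le_self _ <|
          mul_nonneg hc.le (InformationTheory.klFun_nonneg (div_pos ht hc).le)

lemma rnDeriv_toReal_ae_eq_zero_of_notMem {α : Type*} [MeasurableSpace α] {m μ : Measure α}
    [SigmaFinite m] [SigmaFinite μ] (hac : μ ≪ m) {S : Set α} (hS : MeasurableSet S)
    (hμS : ∀ᵐ z ∂μ, z ∈ S) : ∀ᵐ z ∂m, z ∉ S → (μ.rnDeriv m z).toReal = 0 := by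
  have hzero : ∫⁻ z in Sᶜ, μ.rnDeriv m z ∂m = 0 := by
    rw [Measure.setLIntegral_rnDeriv hac]
    exact hμS
  rw [lintegral_eq_zero_iff (Measure.measurable_rnDeriv _ _)] at hzero
  filter_upwards [(ae_restrict_iff' hS.compl).1 hzero] with z hz hzS
  rw [hz hzS, Pi.zero_apply, ENNReal.toReal_zero]

-- The tangent of `t ↦ t * log t` at the density `1 / v` makes Gibbs' inequality linear.
lemma neg_log_lt_EntInf [SigmaFinite m] [IsProbabilityMeasure μ] {S : Set (ℝ × ℝ)}
    (hS : MeasurableSet S) (hμS : ∀ᵐ z ∂μ, z ∈ S) {v : ℝ} (hv : m S < ENNReal.ofReal v) :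
    ((-Real.log v : ℝ) : EReal) < EntInf m μ := by
  by_cases hac : μ ≪ m
  swap
  · rw [EntInf, if_neg hac]
    exact EReal.coe_lt_top _
  have hv0 : 0 < v := ENNReal.ofReal_pos.1 (pos_of_gt hv)
  set ρ : ℝ × ℝ → ℝ := fun z ↦ (μ.rnDeriv m z).toReal
  set tangent : ℝ × ℝ → ℝ := fun z ↦
    (1 + Real.log v⁻¹) * ρ z - S.indicator (fun _ ↦ v⁻¹) z
  have hρ : Integrable (fun z ↦ (1 + Real.log v⁻¹) * ρ z) m :=
    Measure.integrable_toReal_rnDeriv.const_mul _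
  have hS_int : Integrable (S.indicator fun _ ↦ v⁻¹) m :=
    (integrable_indicator_iff hS).2 (integrableOn_const hv.ne_top)
  have hle : ∀ᵐ z ∂m, tangent z ≤ ρ z * Real.log (ρ z) := by
    filter_upwards [rnDeriv_toReal_ae_eq_zero_of_notMem hac hS hμS] with z hz
    by_cases hzS : z ∈ S
    · simpa only [tangent, Set.indicator_of_mem hzS] using
        tangent_le_mul_log ENNReal.toReal_nonneg (inv_pos.2 hv0)
    · simp [tangent, ρ, hzS, hz hzS]
  have htangent : ∫ z, tangent z ∂m = 1 - Real.log v - m.real S / v := by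
    rw [integral_sub hρ hS_int, integral_const_mul, Measure.integral_toReal_rnDeriv hac,
      probReal_univ, integral_indicator_const _ hS, Real.log_inv, smul_eq_mul, div_eq_mul_inv]
    ring
  have hratio : m.real S / v < 1 :=
    (div_lt_one hv0).2 ((ENNReal.lt_ofReal_iff_toReal_lt hv.ne_top).1 hv)
  calc ((-Real.log v : ℝ) : EReal) < ((∫ z, tangent z ∂m : ℝ) : EReal) := by
        rw [htangent, EReal.coe_lt_coe_iff]
        linarith
    _ ≤ EntInf m μ := coe_integral_le_EntInf hac (hρ.sub hS_int) hle

end Entropy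

section Wasserstein

variable {μ ν : Measure (ℝ × ℝ)}

lemma W2_le_of_mem_couplings {γ : Measure ((ℝ × ℝ) × (ℝ × ℝ))} (hγ : γ ∈ Couplings μ ν)
    {r : ℝ≥0∞} (hcost : costSup γ ≤ r ^ 2) : W2 μ ν ≤ r := by
  rw [W2, one_div, ENNReal.rpow_inv_le_iff two_pos, ENNReal.rpow_two]
  exact (iInf₂_le γ hγ).trans hcost

lemma exists_mem_couplings_costSup_lt {r : ℝ≥0∞} (hr : W2 μ ν < r) :
    ∃ γ ∈ Couplings μ ν, costSup γ < r ^ 2 := by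
  rw [W2, one_div, ENNReal.rpow_inv_lt_iff two_pos, ENNReal.rpow_two] at hr
  simpa only [iInf_lt_iff, exists_prop] using hr

lemma W2_map_le [IsProbabilityMeasure μ] {T : ℝ × ℝ → ℝ × ℝ} (hT : Measurable T) {r : ℝ≥0∞}
    (hr : ∀ z, edist z (T z) ≤ r) : W2 μ (μ.map T) ≤ r := by
  have hgraph : Measurable fun z ↦ (z, T z) := measurable_id.prodMk hT
  refine W2_le_of_mem_couplings (γ := μ.map fun z ↦ (z, T z))
    ⟨Measure.isProbabilityMeasure_map hgraph.aemeasurable, ?_, ?_⟩ ?_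
  · rw [Measure.map_map measurable_fst hgraph]
    exact Measure.map_id
  · rw [Measure.map_map measurable_snd hgraph]
    rfl
  · calc costSup (μ.map fun z ↦ (z, T z)) = ∫⁻ z, edist z (T z) ^ 2 ∂μ := by
          rw [costSup, lintegral_map (by fun_prop) hgraph]
      _ ≤ ∫⁻ _, r ^ 2 ∂μ := lintegral_mono fun z ↦ pow_le_pow_left' (hr z) 2
      _ = r ^ 2 := by rw [lintegral_const, measure_univ, mul_one]

end Wasserstein

section Displacement

lemma integral_sub_const_sq {α : Type*} [MeasurableSpace α] {m : Measure α}
    [IsProbabilityMeasure m] {D : α → ℝ} (hD : MemLp D 2 m) (a : ℝ) :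
    ∫ x, (D x - a) ^ 2 ∂m = ∫ x, D x ^ 2 ∂m - 2 * a * ∫ x, D x ∂m + a ^ 2 := by
  have hlinear : Integrable (fun x ↦ 2 * a * D x) m := (hD.integrable one_le_two).const_mul _
  have hquadratic : Integrable (fun x ↦ D x ^ 2 - 2 * a * D x) m := hD.integrable_sq.sub hlinear
  calc ∫ x, (D x - a) ^ 2 ∂m = ∫ x, (D x ^ 2 - 2 * a * D x + a ^ 2) ∂m := by
        congr with x
        ring
    _ = ∫ x, D x ^ 2 ∂m - 2 * a * ∫ x, D x ∂m + a ^ 2 := by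
        rw [integral_add hquadratic (integrable_const _), integral_sub hD.integrable_sq hlinear,
          integral_const_mul, integral_const, probReal_univ, one_smul]

variable {μ ν : Measure (ℝ × ℝ)} {γ : Measure ((ℝ × ℝ) × (ℝ × ℝ))} {f : ℝ × ℝ → ℝ}

lemma lintegral_displacement_sq_le_costSup (hf : LipschitzWith 1 f) :
    ∫⁻ p, ENNReal.ofReal ((f p.2 - f p.1) ^ 2) ∂γ ≤ costSup γ := by
  refine lintegral_mono fun p ↦ ?_
  calc ENNReal.ofReal ((f p.2 - f p.1) ^ 2) = edist (f p.1) (f p.2) ^ 2 := by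
        rw [edist_comm, edist_dist, Real.dist_eq, ← ENNReal.ofReal_pow (abs_nonneg _), sq_abs]
    _ ≤ edist p.1 p.2 ^ 2 := pow_le_pow_left' (by simpa using hf p.1 p.2) 2

lemma memLp_displacement (hf : LipschitzWith 1 f) (hcost : costSup γ ≠ ∞) :
    MemLp (fun p ↦ f p.2 - f p.1) 2 γ := by
  have hf_cont : Continuous f := hf.continuous
  refine (memLp_two_iff_integrable_sq (by fun_prop)).2 ⟨by fun_prop, ?_⟩
  rw [hasFiniteIntegral_iff_ofReal (.of_forall fun p ↦ sq_nonneg _)]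
  exact (lintegral_displacement_sq_le_costSup hf).trans_lt hcost.lt_top

lemma integral_displacement_sq_le (hf : LipschitzWith 1 f) (hcost : costSup γ ≠ ∞) :
    ∫ p, (f p.2 - f p.1) ^ 2 ∂γ ≤ (costSup γ).toReal := by
  rw [integral_eq_lintegral_of_nonneg_ae (.of_forall fun p ↦ sq_nonneg _)
    (memLp_displacement hf hcost).integrable_sq.aestronglyMeasurable]
  exact ENNReal.toReal_mono hcost (lintegral_displacement_sq_le_costSup hf)

lemma integrable_comp_snd_of_costSup_ne_top [IsFiniteMeasure γ] (hf : LipschitzWith 1 f)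
    (hcost : costSup γ ≠ ∞) (hf_fst : Integrable (fun p ↦ f p.1) γ) :
    Integrable (fun p ↦ f p.2) γ := by
  simpa only [Pi.add_def, sub_add_cancel] using
    ((memLp_displacement hf hcost).integrable one_le_two).add hf_fst

lemma integrable_of_W2_ne_top (hf : LipschitzWith 1 f) (hfμ : Integrable f μ)
    (hW : W2 μ ν ≠ ∞) : Integrable f ν := by
  obtain ⟨γ, ⟨_, rfl, rfl⟩, hcost⟩ := exists_mem_couplings_costSup_lt hW.lt_top
  have hf_meas : Measurable f := hf.continuous.measurable
  rw [integrable_map_measure (by fun_prop) (by fun_prop)] at hfμ ⊢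
  exact integrable_comp_snd_of_costSup_ne_top hf hcost.ne_top hfμ

lemma integral_displacement_sub_sq_le (hγ : γ ∈ Couplings μ ν) (hf : LipschitzWith 1 f)
    (hfμ : Integrable f μ) (hcost : costSup γ ≠ ∞) (a : ℝ) :
    ∫ p, (f p.2 - f p.1 - a) ^ 2 ∂γ ≤
      (costSup γ).toReal - 2 * a * (∫ z, f z ∂ν - ∫ z, f z ∂μ) + a ^ 2 := by
  obtain ⟨_, rfl, rfl⟩ := hγ
  have hf_meas : Measurable f := hf.continuous.measurable
  have hf_fst : Integrable (fun p ↦ f p.1) γ := hfμ.comp_measurable measurable_fst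
  have hf_snd := integrable_comp_snd_of_costSup_ne_top hf hcost hf_fst
  rw [integral_sub_const_sq (memLp_displacement hf hcost), integral_sub hf_snd hf_fst,
    integral_map (by fun_prop) (by fun_prop), integral_map (by fun_prop) (by fun_prop)]
  gcongr
  exact integral_displacement_sq_le hf hcost

lemma ofReal_integral_sub_le_W2 (hf : LipschitzWith 1 f) (hfμ : Integrable f μ) :
    ENNReal.ofReal (∫ z, f z ∂ν - ∫ z, f z ∂μ) ≤ W2 μ ν := by
  by_contra! hlt
  obtain ⟨γ, hγ, hcost⟩ := exists_mem_couplings_costSup_lt hlt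
  rw [← ENNReal.ofReal_pow (ENNReal.ofReal_pos.1 (pos_of_gt hlt)).le] at hcost
  have hcost_lt := (ENNReal.lt_ofReal_iff_toReal_lt hcost.ne_top).1 hcost
  have hmoment := integral_displacement_sub_sq_le hγ hf hfμ hcost.ne_top
    (∫ z, f z ∂ν - ∫ z, f z ∂μ)
  have hmoment_nonneg : 0 ≤ ∫ p, (f p.2 - f p.1 - (∫ z, f z ∂ν - ∫ z, f z ∂μ)) ^ 2 ∂γ :=
    integral_nonneg fun p ↦ sq_nonneg _
  linarith

lemma lintegral_infEDist_sq_le (hγ : γ ∈ Couplings μ ν) (hf : LipschitzWith 1 f)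
    (hfμ : Integrable f μ) (hcost : costSup γ ≠ ∞) {C : Set ℝ} (hμC : ∀ᵐ z ∂μ, f z ∈ C) (r : ℝ) :
    ∫⁻ z, Metric.infEDist (f z - r) C ^ 2 ∂ν ≤
      ENNReal.ofReal (∫ p, (f p.2 - f p.1 - r) ^ 2 ∂γ) := by
  obtain ⟨_, rfl, rfl⟩ := hγ
  have hf_meas : Measurable f := hf.continuous.measurable
  have hint : Integrable (fun p ↦ (f p.2 - f p.1 - r) ^ 2) γ :=
    ((memLp_displacement hf hcost).sub (memLp_const r)).integrable_sq
  rw [lintegral_map (by fun_prop) measurable_snd,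
    ofReal_integral_eq_lintegral_ofReal hint (.of_forall fun p ↦ sq_nonneg _)]
  refine lintegral_mono_ae ?_
  filter_upwards [ae_of_ae_map measurable_fst.aemeasurable hμC] with p hp
  calc Metric.infEDist (f p.2 - r) C ^ 2 ≤ edist (f p.2 - r) (f p.1) ^ 2 :=
        pow_le_pow_left' (Metric.infEDist_le_edist_of_mem hp) 2
    _ = ENNReal.ofReal ((f p.2 - f p.1 - r) ^ 2) := by
        rw [edist_dist, Real.dist_eq, ← ENNReal.ofReal_pow (abs_nonneg _), sq_abs, sub_right_comm]

lemma ae_sub_mem_of_W2_le (hf : LipschitzWith 1 f) (hfμ : Integrable f μ) {C : Set ℝ}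
    (hC : IsClosed C) (hμC : ∀ᵐ z ∂μ, f z ∈ C) {r : ℝ} (hr : 0 ≤ r)
    (hW : W2 μ ν ≤ ENNReal.ofReal r) (hmean : r ≤ ∫ z, f z ∂ν - ∫ z, f z ∂μ) :
    ∀ᵐ z ∂ν, f z - r ∈ C := by
  have hbound (t : ℝ) (ht : r < t) :
      ∫⁻ z, Metric.infEDist (f z - r) C ^ 2 ∂ν ≤ ENNReal.ofReal (t ^ 2 - r ^ 2) := by
    obtain ⟨γ, hγ, hcost⟩ := exists_mem_couplings_costSup_lt
      (hW.trans_lt ((ENNReal.ofReal_lt_ofReal_iff (hr.trans_lt ht)).2 ht))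
    rw [← ENNReal.ofReal_pow (hr.trans ht.le)] at hcost
    have hcost_lt := (ENNReal.lt_ofReal_iff_toReal_lt hcost.ne_top).1 hcost
    refine (lintegral_infEDist_sq_le hγ hf hfμ hcost.ne_top hμC r).trans
      (ENNReal.ofReal_le_ofReal ?_)
    have hmoment := integral_displacement_sub_sq_le hγ hf hfμ hcost.ne_top r
    have hmean_mul := mul_le_mul_of_nonneg_left hmean hr
    linarith
  have hlimit : Filter.Tendsto (fun t : ℝ ↦ ENNReal.ofReal (t ^ 2 - r ^ 2))
      (nhdsWithin r (Set.Ioi r)) (nhds 0) := by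
    have hcont : Continuous fun t : ℝ ↦ ENNReal.ofReal (t ^ 2 - r ^ 2) :=
      ENNReal.continuous_ofReal.comp (by fun_prop)
    simpa using (hcont.tendsto r).mono_left nhdsWithin_le_nhds
  have hzero : ∫⁻ z, Metric.infEDist (f z - r) C ^ 2 ∂ν = 0 :=
    nonpos_iff_eq_zero.1 (ge_of_tendsto hlimit (eventually_mem_nhdsWithin.mono hbound))
  have hf_meas : Measurable f := hf.continuous.measurable
  rw [lintegral_eq_zero_iff (by fun_prop)] at hzero
  filter_upwards [hzero] with z hz
  exact (Metric.mem_iff_infEDist_zero_of_closed hC).2 (pow_eq_zero_iff two_ne_zero |>.1 hz)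

lemma ae_sub_mem_of_W2_le_of_W2_le {μ₀ μ₁ : Measure (ℝ × ℝ)} (hf : LipschitzWith 1 f)
    (hfμ₀ : Integrable f μ₀) {C : Set ℝ} (hC : IsClosed C) (hμ₀C : ∀ᵐ z ∂μ₀, f z ∈ C) {r s : ℝ}
    (hr : 0 ≤ r) (hs : 0 ≤ s) (hWr : W2 μ₀ μ ≤ ENNReal.ofReal r)
    (hWs : W2 μ μ₁ ≤ ENNReal.ofReal s) (hmean : r + s ≤ ∫ z, f z ∂μ₁ - ∫ z, f z ∂μ₀) :
    ∀ᵐ z ∂μ, f z - r ∈ C := by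
  have hfμ : Integrable f μ :=
    integrable_of_W2_ne_top hf hfμ₀ (ne_top_of_le_ne_top ofReal_ne_top hWr)
  have hs_mean : ∫ z, f z ∂μ₁ - ∫ z, f z ∂μ ≤ s :=
    (ENNReal.ofReal_le_ofReal_iff hs).1 ((ofReal_integral_sub_le_W2 hf hfμ).trans hWs)
  exact ae_sub_mem_of_W2_le hf hfμ₀ hC hμ₀C hr hWr (by linarith)

end Displacement

section Translation

lemma integral_fst_map_add_right {μ : Measure (ℝ × ℝ)} [IsProbabilityMeasure μ]
    (hμ : Integrable Prod.fst μ) (l : ℝ) :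
    ∫ z, z.1 ∂(μ.map (· + (l, 0))) - ∫ z, z.1 ∂μ = l := by
  rw [integral_map (by fun_prop) (by fun_prop)]
  simp only [Prod.fst_add]
  rw [integral_add hμ (integrable_const l), integral_const, probReal_univ, one_smul,
    add_sub_cancel_left]

lemma W2_map_add_right {μ : Measure (ℝ × ℝ)} [IsProbabilityMeasure μ]
    (hμ : Integrable Prod.fst μ) {l : ℝ} (hl : 0 ≤ l) :
    W2 μ (μ.map (· + (l, 0))) = ENNReal.ofReal l := by
  refine le_antisymm (W2_map_le (by fun_prop) fun z ↦ ?_) ?_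
  · rw [edist_dist, dist_self_add_right, Prod.norm_mk, norm_zero, Real.norm_of_nonneg hl,
      max_eq_left hl]
  · have hle := ofReal_integral_sub_le_W2 (ν := μ.map (· + (l, 0))) LipschitzWith.prod_fst hμ
    rwa [integral_fst_map_add_right hμ] at hle

lemma ae_fst_mem_Icc_of_midpoint {μ₀ μ : Measure (ℝ × ℝ)} [IsProbabilityMeasure μ₀] {a b l : ℝ}
    (hμ₀ : ∀ᵐ z ∂μ₀, z.1 ∈ Set.Icc a b) (hl : 0 ≤ l) (hW₀ : W2 μ₀ μ ≤ ENNReal.ofReal (l / 2))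
    (hW₁ : W2 μ (μ₀.map (· + (l, 0))) ≤ ENNReal.ofReal (l / 2)) :
    ∀ᵐ z ∂μ, z.1 ∈ Set.Icc (a + l / 2) (b + l / 2) := by
  have hint : Integrable Prod.fst μ₀ := .of_mem_Icc a b measurable_fst.aemeasurable hμ₀
  have hmean : l / 2 + l / 2 ≤ ∫ z, z.1 ∂(μ₀.map (· + (l, 0))) - ∫ z, z.1 ∂μ₀ := by
    rw [integral_fst_map_add_right hint, add_halves]
  filter_upwards [ae_sub_mem_of_W2_le_of_W2_le LipschitzWith.prod_fst hint isClosed_Icc hμ₀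
    (by positivity) (by positivity) hW₀ hW₁ hmean] with z hz
  exact ⟨le_sub_iff_add_le.1 hz.1, sub_le_iff_le_add.1 hz.2⟩

lemma map_cond_preimage {α β : Type*} [MeasurableSpace α] [MeasurableSpace β] {m : Measure α}
    {m' : Measure β} {T : α → β} (hT : MeasurePreserving T m m') {A : Set β}
    (hA : MeasurableSet A) : (m[|T ⁻¹' A]).map T = m'[|A] := by
  rw [ProbabilityTheory.cond, Measure.map_smul, (hT.restrict_preimage hA).map_eq,
    hT.measure_preimage hA.nullMeasurableSet, ProbabilityTheory.cond]

lemma preimage_add_right_Icc_prod (l h : ℝ) (J : Set ℝ) :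
    (· + (l, 0)) ⁻¹' (Set.Icc l (l + h) ×ˢ J) = Set.Icc 0 h ×ˢ J := by
  ext ⟨x, y⟩
  simp [add_comm x l]

lemma map_add_right_cond_Icc_prod (l h : ℝ) {J : Set ℝ} (hJ : MeasurableSet J) :
    (volume[|Set.Icc 0 h ×ˢ J]).map (· + (l, 0)) = volume[|Set.Icc l (l + h) ×ˢ J] := by
  rw [← preimage_add_right_Icc_prod l h J]
  exact map_cond_preimage (measurePreserving_add_right volume (l, 0)) (measurableSet_Icc.prod hJ)

lemma volume_Icc_prod_Icc (a b c d : ℝ) :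
    volume (Set.Icc a b ×ˢ Set.Icc c d) = ENNReal.ofReal (b - a) * ENNReal.ofReal (d - c) := by
  rw [Measure.volume_eq_prod, Measure.prod_prod, Real.volume_Icc, Real.volume_Icc]

lemma volume_Icc_prod_Icc_ne_zero {a b c d : ℝ} (hab : a < b) (hcd : c < d) :
    volume (Set.Icc a b ×ˢ Set.Icc c d) ≠ 0 := by
  simp only [volume_Icc_prod_Icc, ne_eq, mul_eq_zero, ENNReal.ofReal_eq_zero, sub_nonpos, not_or,
    not_le, hab, hcd, and_self]

lemma EntInf_cond_Icc_prod_Icc {a b c d : ℝ} (hab : a < b) (hcd : c < d) {X : Set (ℝ × ℝ)}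
    (hX : Set.Icc a b ×ˢ Set.Icc c d ⊆ X) :
    EntInf (volume.restrict X) volume[|Set.Icc a b ×ˢ Set.Icc c d] =
      ((-Real.log ((b - a) * (d - c)) : ℝ) : EReal) := by
  rw [EntInf_restrict_cond (measurableSet_Icc.prod measurableSet_Icc) hX
    (volume_Icc_prod_Icc_ne_zero hab hcd) (isCompact_Icc.prod isCompact_Icc).measure_ne_top,
    Measure.real, volume_Icc_prod_Icc, ENNReal.toReal_mul,
    ENNReal.toReal_ofReal (sub_nonneg.2 hab.le), ENNReal.toReal_ofReal (sub_nonneg.2 hcd.le)]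

end Translation

theorem fails_CD_K_infty_general (K : ℝ) {h l : ℝ} (hh : 0 < h) (hl : 0 ≤ l) {X : Set (ℝ × ℝ)}
    (hA0 : Set.Icc 0 h ×ˢ Set.Icc 0 h ⊆ X) (hA1 : Set.Icc l (l + h) ×ˢ Set.Icc 0 h ⊆ X)
    (hstrip : volume (X ∩ Set.Icc (l / 2) (l / 2 + h) ×ˢ Set.univ)
      < ENNReal.ofReal (Real.exp (K * l ^ 2 / 8) * h ^ 2)) :
    W2 volume[|Set.Icc 0 h ×ˢ Set.Icc 0 h] volume[|Set.Icc l (l + h) ×ˢ Set.Icc 0 h] =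
        ENNReal.ofReal l ∧
      ¬ ∃ μ : Measure (ℝ × ℝ), IsProbabilityMeasure μ ∧
        W2 volume[|Set.Icc 0 h ×ˢ Set.Icc 0 h] μ = ENNReal.ofReal (l / 2) ∧
        W2 μ volume[|Set.Icc l (l + h) ×ˢ Set.Icc 0 h] = ENNReal.ofReal (l / 2) ∧
        EntInf (volume.restrict X) μ ≤
          ((1 / 2 : ℝ) : EReal) *
              EntInf (volume.restrict X) volume[|Set.Icc 0 h ×ˢ Set.Icc 0 h]
            + ((1 / 2 : ℝ) : EReal) *
              EntInf (volume.restrict X) volume[|Set.Icc l (l + h) ×ˢ Set.Icc 0 h]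
            - ((K / 8 * l ^ 2 : ℝ) : EReal) := by
  have : IsProbabilityMeasure volume[|Set.Icc 0 h ×ˢ Set.Icc 0 h] :=
    ProbabilityTheory.cond_isProbabilityMeasure_of_finite (volume_Icc_prod_Icc_ne_zero hh hh)
      (isCompact_Icc.prod isCompact_Icc).measure_ne_top
  have hfst : ∀ᵐ z ∂volume[|Set.Icc 0 h ×ˢ Set.Icc 0 h], z.1 ∈ Set.Icc 0 h :=
    (ProbabilityTheory.ae_cond_mem (measurableSet_Icc.prod measurableSet_Icc)).mono fun _ ↦ And.left
  have hEnt₀ := EntInf_cond_Icc_prod_Icc hh hh hA0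
  have hEnt₁ := EntInf_cond_Icc_prod_Icc (lt_add_of_pos_right l hh) hh hA1
  rw [sub_zero, ← sq] at hEnt₀
  rw [sub_zero, add_sub_cancel_left, ← sq] at hEnt₁
  rw [hEnt₀, hEnt₁, ← map_add_right_cond_Icc_prod l h measurableSet_Icc]
  refine ⟨W2_map_add_right (.of_mem_Icc 0 h measurable_fst.aemeasurable hfst) hl, ?_⟩
  rintro ⟨μ, _, hW₀, hW₁, hEnt⟩
  have hμ_strip : ∀ᵐ z ∂μ, z.1 ∈ Set.Icc (l / 2) (l / 2 + h) := by
    simpa only [zero_add, add_comm h] using ae_fst_mem_Icc_of_midpoint hfst hl hW₀.le hW₁.le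
  have hstrip_meas : MeasurableSet (Prod.fst ⁻¹' Set.Icc (l / 2) (l / 2 + h) : Set (ℝ × ℝ)) :=
    measurable_fst measurableSet_Icc
  rw [Set.prod_univ, Set.inter_comm, ← Measure.restrict_apply hstrip_meas] at hstrip
  have hlt := (neg_log_lt_EntInf hstrip_meas hμ_strip hstrip).trans_le hEnt
  norm_cast at hlt
  rw [Real.log_mul (Real.exp_ne_zero _) (by positivity), Real.log_exp] at hlt
  linarith

/-- Theorem 3.9: failure of CD(K,∞). With two squares A0, A1 on opposite sides of a thin
strip, no midpoint measure supported in X can satisfy the CD(K,∞) entropy bound. -/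
theorem fails_CD_K_infty
    (K h l : ℝ) (hh : 0 < h) (hl : 0 < l) (hhl : 2 * h < l)
    (X : Set (ℝ × ℝ)) (hXmeas : MeasurableSet X)
    (hA0 : Set.Icc (0:ℝ) h ×ˢ Set.Icc (0:ℝ) h ⊆ X)
    (hA1 : Set.Icc l (l + h) ×ˢ Set.Icc (0:ℝ) h ⊆ X)
    (hstrip : volume (X ∩ Set.Icc (l/2) (l/2 + h) ×ˢ (Set.univ : Set ℝ))
        < ENNReal.ofReal (Real.exp (K * l ^ 2 / 8) * h ^ 2))
    (μ0 μ1 : Measure (ℝ × ℝ))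
    (hμ0 : μ0 = (volume (Set.Icc (0:ℝ) h ×ˢ Set.Icc (0:ℝ) h))⁻¹
        • volume.restrict (Set.Icc (0:ℝ) h ×ˢ Set.Icc (0:ℝ) h))
    (hμ1 : μ1 = (volume (Set.Icc l (l + h) ×ˢ Set.Icc (0:ℝ) h))⁻¹
        • volume.restrict (Set.Icc l (l + h) ×ˢ Set.Icc (0:ℝ) h)) :
    W2 μ0 μ1 = ENNReal.ofReal l ∧
    ¬ ∃ μ : Measure (ℝ × ℝ), IsProbabilityMeasure μ ∧ μ Xᶜ = 0 ∧
        W2 μ0 μ = ENNReal.ofReal (l/2) ∧ W2 μ μ1 = ENNReal.ofReal (l/2) ∧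
        EntInf (volume.restrict X) μ ≤
          ((1/2 : ℝ) : EReal) * EntInf (volume.restrict X) μ0
            + ((1/2 : ℝ) : EReal) * EntInf (volume.restrict X) μ1
            - ((K / 8 * l ^ 2 : ℝ) : EReal) := by
  subst hμ0 hμ1
  exact (fails_CD_K_infty_general K hh hl.le hA0 hA1 hstrip).imp_right fun hnot ⟨μ, hμ, _, hmid⟩ ↦
    hnot ⟨μ, hμ, hmid⟩

end
end

section
/- For all real numbers p, q ≥ 0 and λ > 0 one has (1/2)·(1 + p) · (1/4)·(1 + q + λ + q/λ) ≥ ((1 + (p·q)^{1/4})/2)^4. -/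
open MeasureTheory ENNReal
open scoped Classical

noncomputable section

/-! The right-hand side factors: `1 + q + λ + q / λ = (1 + λ) * (1 + q / λ)`, so that, up to the
factor `1 / 16`, it is `(1 + 1) * (1 + p) * (1 + λ) * (1 + q / λ)`. The numbers `1`, `p`, `λ`,
`q / λ` have product `p * q`, and the inequality is the superadditivity of the geometric mean on
`[0, ∞) ^ 4`, applied to the vectors `(1, 1, 1, 1)` and `(1, p, λ, q / λ)`. Superadditivity
follows from the AM-GM inequality for the ratios `a i / (a i + b i)` and `b i / (a i + b i)`, which
add up to at most `1` for each `i`. -/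

section GeometricMean

variable {ι : Type*} {s : Finset ι} {w a b : ι → ℝ}

theorem prod_rpow_add_prod_rpow_le_one (hw : ∀ i ∈ s, 0 ≤ w i) (hw' : ∑ i ∈ s, w i = 1)
    (ha : ∀ i ∈ s, 0 ≤ a i) (hb : ∀ i ∈ s, 0 ≤ b i) (hab : ∀ i ∈ s, a i + b i ≤ 1) :
    ∏ i ∈ s, a i ^ w i + ∏ i ∈ s, b i ^ w i ≤ 1 :=
  calc
    ∏ i ∈ s, a i ^ w i + ∏ i ∈ s, b i ^ w i ≤ ∑ i ∈ s, w i * a i + ∑ i ∈ s, w i * b i :=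
      add_le_add (Real.geom_mean_le_arith_mean_weighted s w a hw hw' ha)
        (Real.geom_mean_le_arith_mean_weighted s w b hw hw' hb)
    _ = ∑ i ∈ s, w i * (a i + b i) := by simp only [mul_add, Finset.sum_add_distrib]
    _ ≤ ∑ i ∈ s, w i :=
      Finset.sum_le_sum fun i hi ↦ mul_le_of_le_one_right (hw i hi) (hab i hi)
    _ = 1 := hw'

theorem prod_rpow_add_prod_rpow_le_prod_add_rpow (hw : ∀ i ∈ s, 0 ≤ w i)
    (hw' : ∑ i ∈ s, w i = 1) (ha : ∀ i ∈ s, 0 ≤ a i) (hb : ∀ i ∈ s, 0 ≤ b i) :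
    ∏ i ∈ s, a i ^ w i + ∏ i ∈ s, b i ^ w i ≤ ∏ i ∈ s, (a i + b i) ^ w i := by
  have hab : ∀ i ∈ s, 0 ≤ a i + b i := fun i hi ↦ add_nonneg (ha i hi) (hb i hi)
  -- Where `a i + b i = 0`, also `c i = 0`, so the convention `0 / 0 = 0` is harmless.
  have prod_rpow_eq {c : ι → ℝ} (hc : ∀ i ∈ s, 0 ≤ c i) (hcab : ∀ i ∈ s, c i ≤ a i + b i) :
      ∏ i ∈ s, c i ^ w i =
        (∏ i ∈ s, (c i / (a i + b i)) ^ w i) * ∏ i ∈ s, (a i + b i) ^ w i := by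
    rw [← Finset.prod_mul_distrib]
    refine Finset.prod_congr rfl fun i hi ↦ ?_
    rw [← Real.mul_rpow (div_nonneg (hc i hi) (hab i hi)) (hab i hi),
      div_mul_cancel_of_imp fun h ↦ le_antisymm ((hcab i hi).trans_eq h) (hc i hi)]
  rw [prod_rpow_eq ha fun i hi ↦ le_add_of_nonneg_right (hb i hi),
    prod_rpow_eq hb fun i hi ↦ le_add_of_nonneg_left (ha i hi), ← add_mul]
  refine mul_le_of_le_one_left
    (Finset.prod_nonneg fun i hi ↦ Real.rpow_nonneg (hab i hi) _)
    (prod_rpow_add_prod_rpow_le_one hw hw' (fun i hi ↦ div_nonneg (ha i hi) (hab i hi))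
      (fun i hi ↦ div_nonneg (hb i hi) (hab i hi)) fun i _ ↦ ?_)
  rw [← add_div]
  exact div_self_le_one _

theorem prod_rpow_inv_card_add_pow_card_le_prod_add (ha : ∀ i ∈ s, 0 ≤ a i)
    (hb : ∀ i ∈ s, 0 ≤ b i) :
    ((∏ i ∈ s, a i) ^ (s.card : ℝ)⁻¹ + (∏ i ∈ s, b i) ^ (s.card : ℝ)⁻¹) ^ s.card
      ≤ ∏ i ∈ s, (a i + b i) := by
  obtain rfl | hs := s.eq_empty_or_nonempty
  · simp
  have hab : ∀ i ∈ s, 0 ≤ a i + b i := fun i hi ↦ add_nonneg (ha i hi) (hb i hi)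
  have hcard : s.card ≠ 0 := hs.card_ne_zero
  have hsum : ∑ _i ∈ s, (s.card : ℝ)⁻¹ = 1 := by simp [hcard]
  have hroot := prod_rpow_add_prod_rpow_le_prod_add_rpow
    (fun _ _ ↦ by positivity) hsum ha hb
  rw [Real.finsetProd_rpow s a ha, Real.finsetProd_rpow s b hb,
    Real.finsetProd_rpow s (fun i ↦ a i + b i) hab] at hroot
  have hleft : 0 ≤ (∏ i ∈ s, a i) ^ (s.card : ℝ)⁻¹ + (∏ i ∈ s, b i) ^ (s.card : ℝ)⁻¹ :=
    add_nonneg (Real.rpow_nonneg (Finset.prod_nonneg ha) _)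
      (Real.rpow_nonneg (Finset.prod_nonneg hb) _)
  exact (pow_le_pow_left₀ hleft hroot _).trans_eq
    (Real.rpow_inv_natCast_pow (Finset.prod_nonneg hab) hcard)

end GeometricMean

/-- The algebraic core of the Jacobian estimate in the proof of Proposition 3.7. -/
theorem jacobian_algebraic_inequality
    (p q lam : ℝ) (hp : 0 ≤ p) (hq : 0 ≤ q) (hlam : 0 < lam) :
    ((1 + (p * q) ^ ((1:ℝ)/4)) / 2) ^ 4
      ≤ (1/2) * (1 + p) * ((1/4) * (1 + q + lam + q / lam)) := by
  have hnonneg : ∀ i ∈ Finset.univ, 0 ≤ (![1, p, lam, q / lam] : Fin 4 → ℝ) i := by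
    simp [Fin.forall_fin_succ, hp, hlam.le, div_nonneg hq hlam.le]
  have hprod : ∏ i, (![1, p, lam, q / lam] : Fin 4 → ℝ) i = p * q := by
    simp [Fin.prod_univ_four, mul_assoc, mul_div_cancel₀ q hlam.ne']
  have hmean : (1 + (p * q) ^ ((1:ℝ)/4)) ^ 4
      ≤ (1 + 1) * (1 + p) * (1 + lam) * (1 + q / lam) := by
    simpa [hprod, Fin.prod_univ_four] using
      prod_rpow_inv_card_add_pow_card_le_prod_add (a := 1) (fun _ _ ↦ zero_le_one) hnonneg
  have hfactor : 1 + q + lam + q / lam = (1 + lam) * (1 + q / lam) := by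
    field_simp
    ring
  calc
    ((1 + (p * q) ^ ((1:ℝ)/4)) / 2) ^ 4 = (1 + (p * q) ^ ((1:ℝ)/4)) ^ 4 / 16 := by ring
    _ ≤ (1 + 1) * (1 + p) * (1 + lam) * (1 + q / lam) / 16 := by gcongr
    _ = (1/2) * (1 + p) * ((1/4) * (1 + q + lam + q / lam)) := by rw [hfactor]; ring

end
end
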